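/- arXiv:2209.02657 — 8 statements merged into one kernel-verified Lean document; each statement's English description precedes it below -/
import Mathlib

section
/- Let n ≥ 2 and let Σ be a nonempty family of hyperplanes of PG(2n+1,q) satisfying property (P1^−), and let B be the set of black points. Then |B| = (q^{n+1}+1)(q^n−1)/(q−1); every hyperplane of PG(2n+1,q) contains exactly (q^{2n}−1)/(q−1) or exactly (q^{2n}−q^{n+1}+q^n−1)/(q−1) points of B (so B has the same hyperplane intersection numbers as an elliptic quadric Q^−(2n+1,q), i.e. B is a quasi-quadric); and Σ is precisely the set of all hyperplanes of PG(2n+1,q) containing exactly (q^{2n}−1)/(q−1) points of B. -/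
/-!
Let `k = |S|`, let `b` be the number of black points, and put `x = q ^ n`. Two distinct hyperplanes
meet in codimension two, so double counting the incident pairs of a point of a subspace `W` and a
member of `S` expresses the number of black points of `W` through `k` when `W` is the whole space or
a hyperplane; in the latter case it depends only on whether `W` lies in `S`. Counting the pairs of a
black point and a member of `S` then gives a quadratic equation for `k` whose roots are
`x * (q * x + 1)` and `(q * x - 1) * x ^ 2 / (x - 1)`. As `q * x - 1 ≡ q - 1` modulo `x - 1`, the
second root is not an integer once `q < x`, and the first one determines all the intersection
numbers.
-/

open Module Finset

section Counting

variable {F V : Type*} [DivisionRing F] [AddCommGroup V] [Module F V]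

theorem finrank_inf_of_finrank_eq_of_ne [FiniteDimensional F V] {d : ℕ} (hV : finrank F V = d + 2)
    {W U : Submodule F V} (hW : finrank F W = d + 1) (hU : finrank F U = d + 1) (hne : W ≠ U) :
    finrank F (W ⊓ U : Submodule F V) = d := by
  have hdim := Submodule.finrank_sup_add_finrank_inf_eq W U
  have hle : finrank F (W ⊔ U : Submodule F V) ≤ d + 2 := hV ▸ Submodule.finrank_le _
  have hlt : W < W ⊔ U := left_lt_sup.mpr fun hUW ↦
    hne (Submodule.eq_of_le_of_finrank_eq hUW (hU.trans hW.symm)).symm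
  have := Submodule.finrank_lt_finrank_of_lt hlt
  omega

/-- `B` is a set of points, and the number of members of `S` through a point is `β + δ` if the point
lies in `B`, and `β` otherwise. -/
structure HasTwoDegrees [DecidableLE (Submodule F V)] (S B : Finset (Submodule F V)) (β δ : ℕ) :
    Prop where
  finrank_eq_one : ∀ p ∈ B, finrank F p = 1
  card_of_mem : ∀ p ∈ B, #{H ∈ S | p ≤ H} = β + δ
  card_of_notMem : ∀ p : Submodule F V, finrank F p = 1 → p ∉ B → #{H ∈ S | p ≤ H} = β

theorem HasTwoDegrees.sum_card_filter [DecidableLE (Submodule F V)] {S B : Finset (Submodule F V)}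
    {β δ : ℕ} (h : HasTwoDegrees S B β δ) :
    ∑ H ∈ S, #{p ∈ B | p ≤ H} = #B * (β + δ) := by
  rw [← sum_const_nat h.card_of_mem]
  exact (sum_card_bipartiteAbove_eq_sum_card_bipartiteBelow _).symm

variable [Finite V]

/-- The points of the projective space of `V` that lie on `W`, as one-dimensional subspaces. -/
noncomputable def points (W : Submodule F V) : Finset (Submodule F V) :=
  (Set.toFinite {p : Submodule F V | finrank F p = 1 ∧ p ≤ W}).toFinset

@[simp]
theorem mem_points {W p : Submodule F V} : p ∈ points W ↔ finrank F p = 1 ∧ p ≤ W := by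
  simp [points]

/-- The points of the projective space of `W`, seen inside `V`. -/
noncomputable def projectivizationEquivPoints (W : Submodule F V) :
    Projectivization F W ≃ points W :=
  (Projectivization.equivSubmodule F W).trans <|
    (W.mapIic.toEquiv.subtypeEquiv fun p ↦
      (by rw [(Submodule.equivSubtypeMap W p).finrank_eq]; rfl :
        finrank F p = 1 ↔ finrank F (W.mapIic p : Submodule F V) = 1)).trans <|
    (Equiv.subtypeSubtypeEquivSubtypeInter (· ≤ W) (finrank F · = 1)).trans <|
    Equiv.subtypeEquivRight fun p ↦ by rw [mem_points]; exact and_comm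

theorem card_points [Finite F] (W : Submodule F V) :
    #(points W) = ∑ i ∈ range (finrank F W), Nat.card F ^ i := by
  rw [← Nat.card_eq_finsetCard, ← Nat.card_congr (projectivizationEquivPoints W),
    Projectivization.card_of_finrank F W rfl]

section Intersections

variable [Finite F] {S : Finset (Submodule F V)} {d : ℕ} (hV : finrank F V = d + 2)
  (hS : ∀ H ∈ S, finrank F H = d + 1)
include hV hS

theorem sum_card_points_inf_of_notMem {W : Submodule F V} (hW : finrank F W = d + 1)
    (hWS : W ∉ S) :
    ∑ H ∈ S, #(points (W ⊓ H)) = #S * ∑ i ∈ range d, Nat.card F ^ i := by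
  refine sum_const_nat fun H hH ↦ ?_
  have hne : W ≠ H := fun h ↦ hWS (h ▸ hH)
  rw [card_points, finrank_inf_of_finrank_eq_of_ne hV hW (hS H hH) hne]

theorem sum_card_points_inf_of_mem {W : Submodule F V} (hWS : W ∈ S) :
    ∑ H ∈ S, #(points (W ⊓ H)) = #S * ∑ i ∈ range d, Nat.card F ^ i + Nat.card F ^ d := by
  classical
  rw [← insert_erase hWS, sum_insert (notMem_erase W S), card_insert_of_notMem (notMem_erase W S),
    sum_card_points_inf_of_notMem hV (fun H hH ↦ hS H (mem_of_mem_erase hH)) (hS W hWS)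
      (notMem_erase W S), inf_idem, card_points, hS W hWS, sum_range_succ]
  ring

end Intersections

namespace HasTwoDegrees

variable [DecidableLE (Submodule F V)] {S B : Finset (Submodule F V)} {β δ d : ℕ}

theorem mul_card_filter_add (h : HasTwoDegrees S B β δ) (W : Submodule F V) :
    δ * #{p ∈ B | p ≤ W} + β * #(points W) = ∑ H ∈ S, #(points (W ⊓ H)) := by
  classical
  have degree_eq : ∀ p ∈ points W, #{H ∈ S | p ≤ H} = (if p ∈ B then δ else 0) + β := by
    intro p hp
    split_ifs with hpB
    · rw [h.card_of_mem p hpB, add_comm]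
    · rw [h.card_of_notMem p (mem_points.mp hp).1 hpB, zero_add]
  have black_eq : {p ∈ points W | p ∈ B} = {p ∈ B | p ≤ W} := by
    ext p
    simp only [mem_filter, mem_points]
    exact ⟨fun hp ↦ ⟨hp.2, hp.1.2⟩, fun hp ↦ ⟨⟨h.finrank_eq_one p hp.1, hp.2⟩, hp.1⟩⟩
  have inf_eq (H : Submodule F V) : {p ∈ points W | p ≤ H} = points (W ⊓ H) := by
    ext p
    simp only [mem_filter, mem_points, le_inf_iff, and_assoc]
  calc δ * #{p ∈ B | p ≤ W} + β * #(points W)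
      = ∑ p ∈ points W, #{H ∈ S | p ≤ H} := by
        rw [sum_congr rfl degree_eq, sum_add_distrib, ← sum_filter, black_eq, sum_const, sum_const,
          smul_eq_mul, smul_eq_mul, mul_comm δ, mul_comm β]
    _ = ∑ H ∈ S, #{p ∈ points W | p ≤ H} :=
        sum_card_bipartiteAbove_eq_sum_card_bipartiteBelow _
    _ = ∑ H ∈ S, #(points (W ⊓ H)) := sum_congr rfl fun H _ ↦ by rw [inf_eq]

variable [Finite F] (h : HasTwoDegrees S B β δ) (hV : finrank F V = d + 2)
  (hS : ∀ H ∈ S, finrank F H = d + 1)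
include h hV hS

theorem mul_card_add :
    δ * #B + β * ∑ i ∈ range (d + 2), Nat.card F ^ i =
      #S * ∑ i ∈ range (d + 1), Nat.card F ^ i := by
  have count := h.mul_card_filter_add ⊤
  have sum_eq : ∑ H ∈ S, #(points (⊤ ⊓ H)) = #S * ∑ i ∈ range (d + 1), Nat.card F ^ i :=
    sum_const_nat fun H hH ↦ by rw [top_inf_eq, card_points, hS H hH]
  rwa [filter_true_of_mem fun _ _ ↦ le_top, card_points, finrank_top, hV, sum_eq] at count

theorem mul_card_filter_add_of_notMem {W : Submodule F V} (hW : finrank F W = d + 1)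
    (hWS : W ∉ S) :
    δ * #{p ∈ B | p ≤ W} + β * ∑ i ∈ range (d + 1), Nat.card F ^ i =
      #S * ∑ i ∈ range d, Nat.card F ^ i := by
  rw [← sum_card_points_inf_of_notMem hV hS hW hWS, ← h.mul_card_filter_add, card_points, hW]

theorem mul_card_filter_add_of_mem {W : Submodule F V} (hWS : W ∈ S) :
    δ * #{p ∈ B | p ≤ W} + β * ∑ i ∈ range (d + 1), Nat.card F ^ i =
      #S * ∑ i ∈ range d, Nat.card F ^ i + Nat.card F ^ d := by
  rw [← sum_card_points_inf_of_mem hV hS hWS, ← h.mul_card_filter_add, card_points, hS W hWS]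

theorem mul_card_mul_add_card_mul :
    δ * (#B * (β + δ)) + #S * (β * ∑ i ∈ range (d + 1), Nat.card F ^ i) =
      #S * (#S * ∑ i ∈ range d, Nat.card F ^ i + Nat.card F ^ d) := by
  rw [← h.sum_card_filter, mul_sum, ← smul_eq_mul #S, ← sum_const, ← sum_add_distrib]
  exact sum_const_nat fun H hH ↦ h.mul_card_filter_add_of_mem hV hS hH

end HasTwoDegrees

end Counting

section Arithmetic

/- In the application `t` is the number of points of a subspace of codimension two, so that a
hyperplane has `t + x ^ 2` points and the whole space `t + x ^ 2 + q * x ^ 2`. -/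
theorem mul_eq_zero_of_double_counts {R : Type*} [CommRing R] [IsDomain R] {q x t k b : R}
    (hx : x + 1 ≠ 0) (ht : t * (q - 1) = x ^ 2 - 1)
    (hb : x * b + x ^ 2 * (t + x ^ 2 + q * x ^ 2) = k * (t + x ^ 2))
    (hk : x * (b * (x ^ 2 + x)) + k * (x ^ 2 * (t + x ^ 2)) = k * (k * t + x ^ 2)) :
    ((x - 1) * k - (q * x - 1) * x ^ 2) * (k - x * (q * x + 1)) = 0 := by
  refine (mul_eq_zero.mp ?_).resolve_left hx
  linear_combination (x * (x + 1) * (q - 1)) * hb - (q - 1) * hk -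
    (k ^ 2 - k * x ^ 2 - (k * x - x ^ 3) * (x + 1)) * ht

theorem sub_one_mul_ne {q x : ℤ} (hq : 1 < q) (hqx : q < x) (k : ℤ) :
    (x - 1) * k ≠ (q * x - 1) * x ^ 2 := by
  intro hk
  have hdvd : x - 1 ∣ q - 1 :=
    ⟨k - (q - 1) * (x + 1) - q * x ^ 2, by linear_combination -hk⟩
  have := Int.le_of_dvd (by lia) hdvd
  lia

theorem add_pow_eq_sum_pow_add {q n d a c : ℕ} (hq : 0 < q)
    (h : q ^ n * a + q ^ (2 * n) * ∑ i ∈ range (d + 1), q ^ i =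
      q ^ n * (q ^ (n + 1) + 1) * ∑ i ∈ range d, q ^ i + q ^ n * c) :
    a + q ^ n = ∑ i ∈ range d, q ^ i + c := by
  apply Nat.eq_of_mul_eq_mul_left (pow_pos hq n)
  rw [geom_sum_succ] at h
  zify at h ⊢
  linear_combination h

theorem eq_div_of_add_pow_eq_sum_pow_odd {q n a : ℕ} (hq : 2 ≤ q)
    (ha : a + q ^ n = ∑ i ∈ range (2 * n + 1), q ^ i) :
    a = (q ^ (n + 1) + 1) * (q ^ n - 1) / (q - 1) := by
  have hq1 : 1 ≤ q := by lia
  have hsum := geom_sum_mul (q : ℤ) (2 * n + 1)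
  refine Nat.eq_div_of_mul_eq_left (by lia) ?_
  zify [hq1, Nat.one_le_pow n q hq1] at ha ⊢
  linear_combination (q - 1 : ℤ) * ha + hsum

theorem eq_div_of_add_pow_eq_sum_pow_even {q n a : ℕ} (hq : 2 ≤ q) (hn : n ≠ 0)
    (ha : a + q ^ n = ∑ i ∈ range (2 * n), q ^ i) :
    a = (q ^ (2 * n) - q ^ (n + 1) + q ^ n - 1) / (q - 1) := by
  have hq1 : 1 ≤ q := by lia
  have hsum := geom_sum_mul (q : ℤ) (2 * n)
  have hle : q ^ (n + 1) ≤ q ^ (2 * n) := Nat.pow_le_pow_right hq1 (by lia)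
  have hpos : 1 ≤ q ^ (2 * n) - q ^ (n + 1) + q ^ n :=
    le_add_left (Nat.one_le_pow n q hq1)
  refine Nat.eq_div_of_mul_eq_left (by lia) ?_
  zify [hq1, hle, hpos] at ha ⊢
  linear_combination (q - 1 : ℤ) * ha + hsum

end Arithmetic

section EllipticDegrees

variable {F V : Type*} [DivisionRing F] [AddCommGroup V] [Module F V] [Finite F] [Finite V]
  [DecidableLE (Submodule F V)] {S B : Finset (Submodule F V)} {n q : ℕ}
  (hn : 2 ≤ n) (hq : Nat.card F = q) (hV : finrank F V = 2 * n + 2)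
  (hS : ∀ H ∈ S, finrank F H = 2 * n + 1) (h : HasTwoDegrees S B (q ^ (2 * n)) (q ^ n))
include hn hq hV hS h

namespace HasTwoDegrees

theorem card_hyperplanes_eq : #S = q ^ n * (q ^ (n + 1) + 1) := by
  have hq2 : 1 < q := hq ▸ Finite.one_lt_card
  have hqn : q < q ^ n := lt_self_pow₀ hq2 (by lia)
  have ht := geom_sum_mul (q : ℤ) (2 * n)
  have hb := h.mul_card_add hV hS
  have hk := h.mul_card_mul_add_card_mul hV hS
  simp only [hq, sum_range_succ] at hb hk
  zify at hqn hb hk ⊢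
  have hquad := mul_eq_zero_of_double_counts (q := (q : ℤ)) (x := (q : ℤ) ^ n)
    (t := ∑ i ∈ range (2 * n), (q : ℤ) ^ i) (k := #S) (b := #B) (by positivity)
    (by linear_combination ht) (by linear_combination hb) (by linear_combination hk)
  have hroot := (mul_eq_zero.mp hquad).resolve_left
    (sub_ne_zero.mpr (sub_one_mul_ne (by lia) hqn _))
  linear_combination hroot

theorem card_points_add_pow : #B + q ^ n = ∑ i ∈ range (2 * n + 1), q ^ i := by
  subst hq
  refine add_pow_eq_sum_pow_add Nat.card_pos (c := 0) ?_
  rw [← h.card_hyperplanes_eq hn rfl hV hS, mul_zero, add_zero, h.mul_card_add hV hS]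

theorem card_filter_of_mem {W : Submodule F V} (hWS : W ∈ S) :
    #{p ∈ B | p ≤ W} = ∑ i ∈ range (2 * n), q ^ i := by
  subst hq
  refine add_right_cancel (add_pow_eq_sum_pow_add Nat.card_pos (c := Nat.card F ^ n) ?_)
  rw [← h.card_hyperplanes_eq hn rfl hV hS, h.mul_card_filter_add_of_mem hV hS hWS]
  ring

theorem card_filter_add_pow_of_notMem {W : Submodule F V} (hW : finrank F W = 2 * n + 1)
    (hWS : W ∉ S) :
    #{p ∈ B | p ≤ W} + q ^ n = ∑ i ∈ range (2 * n), q ^ i := by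
  subst hq
  refine add_pow_eq_sum_pow_add Nat.card_pos (c := 0) ?_
  rw [← h.card_hyperplanes_eq hn rfl hV hS, mul_zero, add_zero,
    h.mul_card_filter_add_of_notMem hV hS hW hWS]

theorem mem_iff_card_filter_eq {W : Submodule F V} (hW : finrank F W = 2 * n + 1) :
    W ∈ S ↔ #{p ∈ B | p ≤ W} = ∑ i ∈ range (2 * n), q ^ i := by
  refine ⟨h.card_filter_of_mem hn hq hV hS, fun hcard ↦ ?_⟩
  by_contra hWS
  have hadd := h.card_filter_add_pow_of_notMem hn hq hV hS hW hWS
  have : 0 < q ^ n := pow_pos (hq ▸ Nat.card_pos) n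
  lia

end HasTwoDegrees

end EllipticDegrees

theorem stmt_7_general {n : ℕ} (hn : 2 ≤ n) {F V : Type*} [DivisionRing F] [Finite F]
    [AddCommGroup V] [Module F V] (hV : finrank F V = 2 * n + 2) {q : ℕ} (hq : Nat.card F = q)
    {S : Set (Submodule F V)} (hS : ∀ π ∈ S, finrank F π = 2 * n + 1)
    (hP1 : ∀ p : Submodule F V, finrank F p = 1 →
      {π ∈ S | p ≤ π}.ncard = q ^ n * (q ^ n + 1) ∨ {π ∈ S | p ≤ π}.ncard = q ^ (2 * n))
    {B : Set (Submodule F V)}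
    (hB : B = {p : Submodule F V | finrank F p = 1 ∧
      {π ∈ S | p ≤ π}.ncard = q ^ n * (q ^ n + 1)}) :
    B.ncard = (q ^ (n + 1) + 1) * (q ^ n - 1) / (q - 1) ∧
    (∀ π : Submodule F V, finrank F π = 2 * n + 1 →
      {p ∈ B | p ≤ π}.ncard = (q ^ (2 * n) - 1) / (q - 1) ∨
      {p ∈ B | p ≤ π}.ncard = (q ^ (2 * n) - q ^ (n + 1) + q ^ n - 1) / (q - 1)) ∧
    S = {π : Submodule F V | finrank F π = 2 * n + 1 ∧
      {p ∈ B | p ≤ π}.ncard = (q ^ (2 * n) - 1) / (q - 1)} := by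
  classical
  have : FiniteDimensional F V := .of_finrank_pos (by lia)
  have : Finite V := Module.finite_of_finite F
  have hq2 : 2 ≤ q := hq ▸ Finite.one_lt_card
  lift S to Finset (Submodule F V) using S.toFinite
  lift B to Finset (Submodule F V) using B.toFinite
  simp only [mem_coe, ← coe_filter, Set.ncard_coe_finset] at *
  have mem_B (p : Submodule F V) :
      p ∈ B ↔ finrank F p = 1 ∧ #{π ∈ S | p ≤ π} = q ^ n * (q ^ n + 1) := by
    rw [← mem_coe, hB, Set.mem_ofPred_eq]
  have h : HasTwoDegrees S B (q ^ (2 * n)) (q ^ n) :=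
    { finrank_eq_one := fun p hp ↦ ((mem_B p).mp hp).1
      card_of_mem := fun p hp ↦ by rw [((mem_B p).mp hp).2]; ring
      card_of_notMem := fun p hp hpB ↦
        (hP1 p hp).resolve_left fun hcard ↦ hpB ((mem_B p).mpr ⟨hp, hcard⟩) }
  rw [← Nat.geomSum_eq hq2]
  refine ⟨eq_div_of_add_pow_eq_sum_pow_odd hq2 (h.card_points_add_pow hn hq hV hS),
    fun π hπ ↦ ?_, ?_⟩
  · by_cases hπS : π ∈ S
    · exact .inl (h.card_filter_of_mem hn hq hV hS hπS)
    · exact .inr (eq_div_of_add_pow_eq_sum_pow_even hq2 (by lia)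
        (h.card_filter_add_pow_of_notMem hn hq hV hS hπ hπS))
  · ext π
    exact ⟨fun hπ ↦ ⟨hS π hπ, h.card_filter_of_mem hn hq hV hS hπ⟩,
      fun hπ ↦ (h.mem_iff_card_filter_eq hn hq hV hS hπ.1).mpr hπ.2⟩

/-- For `n ≥ 2` and a nonempty family `S` of hyperplanes of `PG(2n+1,q)`
satisfying (P1⁻), the set `B` of black points has size `(q^{n+1}+1)(q^n-1)/(q-1)`, every
hyperplane meets `B` in exactly `(q^{2n}-1)/(q-1)` or `(q^{2n}-q^{n+1}+q^n-1)/(q-1)` points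
(so `B` is a quasi-quadric of elliptic type), and `S` is precisely the set of hyperplanes
meeting `B` in exactly `(q^{2n}-1)/(q-1)` points. -/
theorem stmt_7 (n : ℕ) (hn : 2 ≤ n)
    (F : Type) [Field F] [Fintype F] (q : ℕ) (hq : Fintype.card F = q)
    (S : Set (Submodule F (Fin (2*n+2) → F)))
    (hS : S.Nonempty)
    (hhyp : ∀ π ∈ S, Module.finrank F π = 2*n+1)
    (hP1 : ∀ p : Submodule F (Fin (2*n+2) → F), Module.finrank F p = 1 →
      {π ∈ S | p ≤ π}.ncard = q^n * (q^n + 1) ∨ {π ∈ S | p ≤ π}.ncard = q^(2*n))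
    (B : Set (Submodule F (Fin (2*n+2) → F)))
    (hB : B = {p : Submodule F (Fin (2*n+2) → F) | Module.finrank F p = 1 ∧
      {π ∈ S | p ≤ π}.ncard = q^n * (q^n + 1)}) :
    B.ncard = (q^(n+1) + 1) * (q^n - 1) / (q - 1) ∧
    (∀ π : Submodule F (Fin (2*n+2) → F), Module.finrank F π = 2*n+1 →
      {p ∈ B | p ≤ π}.ncard = (q^(2*n) - 1)/(q - 1) ∨
      {p ∈ B | p ≤ π}.ncard = (q^(2*n) - q^(n+1) + q^n - 1)/(q - 1)) ∧
    S = {π : Submodule F (Fin (2*n+2) → F) | Module.finrank F π = 2*n+1 ∧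
      {p ∈ B | p ≤ π}.ncard = (q^(2*n) - 1)/(q - 1)} :=
  stmt_7_general hn (finrank_fin_fun F) (Nat.card_eq_fintype_card.trans hq) hhyp hP1 hB
end

section
/- Let n ≥ 1 and let Σ be a nonempty family of hyperplanes of PG(2n+1,q) satisfying property (P1^+). Then q^n divides |Σ|; that is, |Σ| = q^n · r for some integer r with 1 ≤ r ≤ (q^{2n+2}−1)/(q−1). -/
/-!
Count the incident pairs `(v, π)` of a vector `v` and a member `π ∈ S`. The zero vector lies in all
`|S|` members, each nonzero vector lies in a multiple of `q ^ n` members, and each member contains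
`q ^ (2n+1)` vectors; reducing the two counts modulo `q ^ n` leaves `q ^ n ∣ |S|`. The bound on `r`
follows from `r ≤ |S|`, since by duality there are as many hyperplanes as points.
-/

open Finset Module

open scoped LinearAlgebra.Projectivization

theorem dvd_card_of_dvd_card_bipartite {α β : Type*} [DecidableEq α] {s : Finset α} {t : Finset β}
    {r : α → β → Prop} [∀ a b, Decidable (r a b)] {d : ℕ} {a₀ : α} (ha₀ : a₀ ∈ s)
    (hr : ∀ b ∈ t, r a₀ b) (habove : ∀ a ∈ s.erase a₀, d ∣ #(t.bipartiteAbove r a))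
    (hbelow : ∀ b ∈ t, d ∣ #(s.bipartiteBelow r b)) : d ∣ #t := by
  have hcount : ∑ a ∈ s.erase a₀, #(t.bipartiteAbove r a) + #t =
      ∑ b ∈ t, #(s.bipartiteBelow r b) := by
    rw [← sum_card_bipartiteAbove_eq_sum_card_bipartiteBelow, ← sum_erase_add s _ ha₀,
      bipartiteAbove, filter_true_of_mem hr]
  exact (Nat.dvd_add_right (dvd_sum habove)).1 (hcount ▸ dvd_sum hbelow)

theorem dvd_ncard_of_dvd_ncard_mem {R M : Type*} [Semiring R] [AddCommMonoid M] [Module R M]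
    [Finite M] {S : Set (Submodule R M)} {d : ℕ} (hcard : ∀ W ∈ S, d ∣ Nat.card W)
    (hmem : ∀ v : M, v ≠ 0 → d ∣ {W ∈ S | v ∈ W}.ncard) : d ∣ S.ncard := by
  classical
  have := Fintype.ofFinite M
  lift S to Finset (Submodule R M) using S.toFinite
  rw [Set.ncard_coe_finset]
  refine dvd_card_of_dvd_card_bipartite (r := fun v W ↦ v ∈ W) (mem_univ (0 : M))
    (fun W _ ↦ W.zero_mem) (fun v hv ↦ ?_) (fun W hW ↦ ?_)
  · rw [← Set.ncard_coe_finset, coe_bipartiteAbove]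
    exact hmem v (ne_of_mem_erase hv)
  · rw [bipartiteBelow, ← Fintype.card_subtype, ← Nat.card_eq_fintype_card]
    exact hcard W hW

section VectorSpace

variable {F V : Type*} [Field F] [AddCommGroup V] [Module F V] [Module.Finite F V]

theorem pow_dvd_ncard_of_pow_dvd_ncard_le [Finite F] {S : Set (Submodule F V)} {m : ℕ}
    (hS : ∀ W ∈ S, m ≤ finrank F W)
    (hpoint : ∀ p : Submodule F V, finrank F p = 1 → Nat.card F ^ m ∣ {W ∈ S | p ≤ W}.ncard) :
    Nat.card F ^ m ∣ S.ncard := by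
  have : Finite V := Module.finite_of_finite F
  refine dvd_ncard_of_dvd_ncard_mem (fun W hW ↦ ?_) fun v hv ↦ ?_
  · rw [Module.natCard_eq_pow_finrank (K := F) (V := W)]
    exact pow_dvd_pow (Nat.card F) (hS W hW)
  · simpa only [Submodule.span_singleton_le_iff_mem] using
      hpoint (F ∙ v) (finrank_span_singleton hv)

theorem finrank_dualAnnihilator_eq_one_iff {W : Submodule F V} :
    finrank F W.dualAnnihilator = 1 ↔ finrank F W + 1 = finrank F V := by
  have := Subspace.finrank_add_finrank_dualAnnihilator_eq W
  omega

theorem ncard_hyperplanes_eq_card_projectivization_dual :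
    {W : Submodule F V | finrank F W + 1 = finrank F V}.ncard = Nat.card (ℙ F (Dual F V)) :=
  Nat.card_congr <|
    (Subspace.orderIsoFiniteDimensional.toEquiv.trans OrderDual.ofDual |>.subtypeEquiv
      fun _ ↦ finrank_dualAnnihilator_eq_one_iff.symm).trans
    (Projectivization.equivSubmodule F (Dual F V)).symm

theorem ncard_hyperplanes [Finite F] :
    {W : Submodule F V | finrank F W + 1 = finrank F V}.ncard =
      (Nat.card F ^ finrank F V - 1) / (Nat.card F - 1) := by
  rw [ncard_hyperplanes_eq_card_projectivization_dual, Projectivization.card'',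
    Module.natCard_eq_pow_finrank (K := F), Subspace.dual_finrank_eq]

theorem stmt_8_general [Finite F] {S : Set (Submodule F V)} {m : ℕ} (hm : m < finrank F V)
    (hS : S.Nonempty) (hhyp : ∀ π ∈ S, finrank F π + 1 = finrank F V)
    (hpoint : ∀ p : Submodule F V, finrank F p = 1 → Nat.card F ^ m ∣ {π ∈ S | p ≤ π}.ncard) :
    ∃ r : ℕ, 1 ≤ r ∧ r ≤ (Nat.card F ^ finrank F V - 1) / (Nat.card F - 1) ∧
      S.ncard = Nat.card F ^ m * r := by
  have : Finite V := Module.finite_of_finite F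
  obtain ⟨r, hr⟩ := pow_dvd_ncard_of_pow_dvd_ncard_le (m := m)
    (fun π hπ ↦ by have := hhyp π hπ; omega) hpoint
  refine ⟨r, Nat.pos_of_ne_zero ?_, ?_, hr⟩
  · rintro rfl
    exact hS.ncard_pos.ne' hr
  · calc r ≤ Nat.card F ^ m * r := Nat.le_mul_of_pos_left r (pow_pos Nat.card_pos m)
      _ = S.ncard := hr.symm
      _ ≤ {W : Submodule F V | finrank F W + 1 = finrank F V}.ncard := Set.ncard_le_ncard hhyp
      _ = _ := ncard_hyperplanes

end VectorSpace

/-- For `n ≥ 1` and a nonempty family `S` of hyperplanes of `PG(2n+1,q)`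
satisfying (P1⁺), `q^n` divides `|S|`: `|S| = q^n · r` with `1 ≤ r ≤ (q^{2n+2}-1)/(q-1)`. -/
theorem stmt_8 (n : ℕ) (hn : 1 ≤ n)
    (F : Type) [Field F] [Fintype F] (q : ℕ) (hq : Fintype.card F = q)
    (S : Set (Submodule F (Fin (2*n+2) → F)))
    (hS : S.Nonempty)
    (hhyp : ∀ π ∈ S, Module.finrank F π = 2*n+1)
    (hP1 : ∀ p : Submodule F (Fin (2*n+2) → F), Module.finrank F p = 1 →
      {π ∈ S | p ≤ π}.ncard = q^n * (q^n - 1) ∨ {π ∈ S | p ≤ π}.ncard = q^(2*n)) :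
    ∃ r : ℕ, 1 ≤ r ∧ r ≤ (q^(2*n+2) - 1)/(q - 1) ∧ S.ncard = q^n * r := by
  obtain rfl : Nat.card F = q := Nat.card_eq_fintype_card.trans hq
  simpa only [finrank_fin_fun] using stmt_8_general (by rw [finrank_fin_fun]; omega) hS
    (fun π hπ ↦ by rw [hhyp π hπ, finrank_fin_fun])
    fun p hp ↦ (hP1 p hp).elim (fun h ↦ h ▸ dvd_mul_right _ _)
      fun h ↦ h ▸ pow_dvd_pow _ (Nat.le_mul_of_pos_left n two_pos)
end

section
/- Let n ≥ 1 and let Σ be a nonempty family of hyperplanes of PG(2n+1,q) satisfying property (P1^−). Then q^n divides |Σ|; that is, |Σ| = q^n · r for some integer r with 1 ≤ r ≤ (q^{2n+2}−1)/(q−1). -/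
/-!
Count the incident pairs `(v, π)` with `v` a nonzero vector and `π ∈ S`. Summing over `v` gives a
multiple of `q ^ m`, because `q ^ m` divides the number of members of `S` through each point.
Summing over `π` gives `|S| * (q ^ k - 1)`, where `k` is the common dimension of the members of `S`,
and `q ^ k - 1` is coprime to `q`. Hence `q ^ m` divides `|S|`. The upper bound is the number of all
hyperplanes, which by duality is the number of points of the dual space.
-/

open Module
open scoped Finset LinearAlgebra.Projectivization

theorem dvd_card_of_dvd_card_bipartiteAbove {α β : Type*} {r : α → β → Prop}
    [∀ a b, Decidable (r a b)] {s : Finset α} {t : Finset β} {d c : ℕ}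
    (hs : ∀ a ∈ s, d ∣ #(t.bipartiteAbove r a)) (ht : ∀ b ∈ t, #(s.bipartiteBelow r b) = c)
    (hdc : d.Coprime c) : d ∣ #t := by
  have double_count : ∑ a ∈ s, #(t.bipartiteAbove r a) = #t * c := by
    rw [Finset.sum_card_bipartiteAbove_eq_sum_card_bipartiteBelow, Finset.sum_const_nat ht]
  exact hdc.dvd_of_dvd_mul_right (double_count ▸ Finset.dvd_sum hs)

theorem coprime_self_pow_sub_one {q k : ℕ} (hq : 0 < q) (hk : k ≠ 0) : q.Coprime (q ^ k - 1) := by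
  have h : (q ^ k).Coprime (q ^ k - 1) :=
    (Nat.coprime_self_sub_right (Nat.one_le_pow k q hq)).2 (Nat.coprime_one_right _)
  exact h.coprime_dvd_left (dvd_pow_self q hk)

section Subspaces

variable {F V : Type*} [Field F] [AddCommGroup V] [Module F V]

theorem ncard_submodule_sdiff_zero (π : Submodule F V) [Module.Finite F π] :
    ((π : Set V) \ {0}).ncard = Nat.card F ^ finrank F π - 1 := by
  rw [Set.ncard_sdiff_singleton_of_mem π.zero_mem, ← natCard_eq_pow_finrank, ← Nat.card_coe_set_eq]
  rfl

variable [Finite F] [FiniteDimensional F V] {S : Set (Submodule F V)}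

theorem dvd_ncard_of_dvd_ncard_points {k d : ℕ} (hS : ∀ π ∈ S, finrank F π = k)
    (hd : ∀ p : Submodule F V, finrank F p = 1 → d ∣ {π ∈ S | p ≤ π}.ncard)
    (hdk : d.Coprime (Nat.card F ^ k - 1)) : d ∣ S.ncard := by
  classical
  have : Finite V := Module.finite_of_finite F
  have := Fintype.ofFinite V
  have above_eq (v : V) : (S.toFinite.toFinset.bipartiteAbove (fun v π ↦ v ∈ π) v : Set _) =
      {π ∈ S | F ∙ v ≤ π} := by
    ext π; simp
  have below_eq (π : Submodule F V) :
      (({0}ᶜ : Finset V).bipartiteBelow (fun v π ↦ v ∈ π) π : Set V) = (π : Set V) \ {0} := by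
    ext v; simp [and_comm]
  rw [Set.ncard_eq_toFinset_card S]
  refine dvd_card_of_dvd_card_bipartiteAbove (r := fun v π ↦ v ∈ π) (s := {0}ᶜ)
    (fun v hv ↦ ?_) (fun π hπ ↦ ?_) hdk
  · rw [← Set.ncard_coe_finset, above_eq]
    exact hd _ (finrank_span_singleton (by simpa using hv))
  · rw [← Set.ncard_coe_finset, below_eq, ncard_submodule_sdiff_zero, hS π (by simpa using hπ)]

end Subspaces

section Hyperplanes

variable (F V : Type*) [Field F] [AddCommGroup V] [Module F V] [FiniteDimensional F V]

/-- Duality between the hyperplanes of `ℙ F V` and the points of the dual projective space: a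
hyperplane corresponds to the line of linear forms vanishing on it. Hyperplanes are encoded as the
subspaces of `V` of codimension one. -/
noncomputable def hyperplaneEquivDualPoint :
    {π : Submodule F V // finrank F π + 1 = finrank F V} ≃ ℙ F (Dual F V) :=
  ((Subspace.orderIsoFiniteDimensional.toEquiv.trans OrderDual.ofDual).subtypeEquiv fun π ↦ by
    change _ ↔ finrank F π.dualAnnihilator = 1
    have := Subspace.finrank_add_finrank_dualAnnihilator_eq π
    lia).trans (Projectivization.equivSubmodule F (Dual F V)).symm

theorem natCard_hyperplanes [Finite F] :
    Nat.card {π : Submodule F V // finrank F π + 1 = finrank F V} =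
      (Nat.card F ^ finrank F V - 1) / (Nat.card F - 1) := by
  rw [Nat.card_congr (hyperplaneEquivDualPoint F V), Projectivization.card'',
    natCard_eq_pow_finrank (K := F), Subspace.dual_finrank_eq]

variable {F V} [Finite F] {S : Set (Submodule F V)}

theorem ncard_le_of_forall_hyperplane (hS : ∀ π ∈ S, finrank F π + 1 = finrank F V) :
    S.ncard ≤ (Nat.card F ^ finrank F V - 1) / (Nat.card F - 1) := by
  have : Finite V := Module.finite_of_finite F
  rw [← natCard_hyperplanes]
  exact Set.ncard_le_ncard (t := {π : Submodule F V | finrank F π + 1 = finrank F V}) hS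

theorem stmt_9_general {m : ℕ} (hV : 1 < finrank F V) (hne : S.Nonempty)
    (hS : ∀ π ∈ S, finrank F π + 1 = finrank F V)
    (hdvd : ∀ p : Submodule F V, finrank F p = 1 → Nat.card F ^ m ∣ {π ∈ S | p ≤ π}.ncard) :
    ∃ r : ℕ, 1 ≤ r ∧ r ≤ (Nat.card F ^ finrank F V - 1) / (Nat.card F - 1) ∧
      S.ncard = Nat.card F ^ m * r := by
  have : Finite V := Module.finite_of_finite F
  have coprime : (Nat.card F ^ m).Coprime (Nat.card F ^ (finrank F V - 1) - 1) :=
    (coprime_self_pow_sub_one Nat.card_pos (by lia)).pow_left m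
  obtain ⟨r, hr⟩ := dvd_ncard_of_dvd_ncard_points
    (fun π hπ ↦ Nat.eq_sub_of_add_eq (hS π hπ)) hdvd coprime
  have r_pos : 0 < r := Nat.pos_of_mul_pos_left (hr ▸ hne.ncard_pos)
  have r_le : r ≤ S.ncard := hr ▸ Nat.le_mul_of_pos_left r (pow_pos Nat.card_pos m)
  exact ⟨r, r_pos, r_le.trans (ncard_le_of_forall_hyperplane hS), hr⟩

end Hyperplanes

/-- For `n ≥ 1` and a nonempty family `S` of hyperplanes of `PG(2n+1,q)`
satisfying (P1⁻), `q^n` divides `|S|`: `|S| = q^n · r` with `1 ≤ r ≤ (q^{2n+2}-1)/(q-1)`. -/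
theorem stmt_9 (n : ℕ) (hn : 1 ≤ n)
    (F : Type) [Field F] [Fintype F] (q : ℕ) (hq : Fintype.card F = q)
    (S : Set (Submodule F (Fin (2*n+2) → F)))
    (hS : S.Nonempty)
    (hhyp : ∀ π ∈ S, Module.finrank F π = 2*n+1)
    (hP1 : ∀ p : Submodule F (Fin (2*n+2) → F), Module.finrank F p = 1 →
      {π ∈ S | p ≤ π}.ncard = q^n * (q^n + 1) ∨ {π ∈ S | p ≤ π}.ncard = q^(2*n)) :
    ∃ r : ℕ, 1 ≤ r ∧ r ≤ (q^(2*n+2) - 1)/(q - 1) ∧ S.ncard = q^n * r := by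
  have hdvd (p : Submodule F (Fin (2 * n + 2) → F)) (hp : finrank F p = 1) :
      q ^ n ∣ {π ∈ S | p ≤ π}.ncard := by
    obtain h | h := hP1 p hp <;> rw [h]
    exacts [dvd_mul_right _ _, pow_dvd_pow q (by lia)]
  rw [Fintype.card_eq_nat_card] at hq
  subst hq
  simpa using stmt_9_general (by simp) hS (by simpa using hhyp) hdvd
end

section
/- Let n ≥ 1 and let Σ be a nonempty family of hyperplanes of PG(2n+1,q) satisfying property (P1^+), and write |Σ| = q^n · r. Then every hyperplane π ∈ Σ contains exactly ((q^{2n}−1)/(q−1)) · (q^{n+1} − r) black points. -/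
/-!
Fix a hyperplane `π ∈ S` of a space of dimension `m + 2` over the field with `q` elements, and let
`M = 1 + q + ⋯ + q ^ (m - 1)` be the number of points of a subspace of codimension two. Counting
the pairs `(p, σ)` with `σ ∈ S` and `p` a point of `π ⊓ σ` in two ways shows that the degrees of
the points of `π` (the numbers of members of `S` through them) add up to `q ^ m + |S| * M`, whatever
`S` is. If these degrees only take the values `q ^ m - d` and `q ^ m`, the sum is also
`q ^ m * (q * M + 1) - d * B`, where `B` counts the points of the smaller degree. Hence
`d * B = M * (q ^ (m + 1) - |S|)`; property (P1⁺) is the case `m = 2 * n`, `d = q ^ n`.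
-/

open Module

section DoubleCounting

variable {α β : Type*}

theorem finsum_mem_ncard_sep_comm {s : Set α} {t : Set β} (r : α → β → Prop) (hs : s.Finite)
    (ht : t.Finite) :
    ∑ᶠ a ∈ s, {b ∈ t | r a b}.ncard = ∑ᶠ b ∈ t, {a ∈ s | r a b}.ncard := by
  classical
  lift s to Finset α using hs
  lift t to Finset β using ht
  simp only [finsum_mem_coe_finset]
  simp only [Finset.mem_coe, ← Finset.coe_filter, Set.ncard_coe_finset]
  exact Finset.sum_card_bipartiteAbove_eq_sum_card_bipartiteBelow r

theorem finsum_mem_add_mul_ncard_eq_of_two_values {s : Set α} (hs : s.Finite) {f : α → ℕ}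
    {c d : ℕ} (hf : ∀ a ∈ s, f a = c ∨ f a = c + d) :
    (∑ᶠ a ∈ s, f a) + d * {a ∈ s | f a = c}.ncard = s.ncard * (c + d) := by
  classical
  lift s to Finset α using hs
  rw [finsum_mem_coe_finset]
  simp only [Finset.mem_coe, ← Finset.coe_filter, Set.ncard_coe_finset]
  rw [Finset.card_filter, Finset.mul_sum, ← Finset.sum_add_distrib]
  refine Finset.sum_const_nat fun a ha ↦ ?_
  rcases hf a ha with h | h <;> simp [h]

end DoubleCounting

section Subspaces

variable {F V : Type*} [DivisionRing F] [AddCommGroup V] [Module F V]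

theorem finrank_inf_of_finrank_eq_add_one {m : ℕ} (hV : finrank F V = m + 2) {A B : Submodule F V}
    (hA : finrank F A = m + 1) (hB : finrank F B = m + 1) (hne : A ≠ B) :
    finrank F (A ⊓ B : Submodule F V) = m := by
  have : FiniteDimensional F V := finite_of_finrank_pos (by lia)
  have hA_lt : A < A ⊔ B := left_lt_sup.2 fun hBA ↦
    hne (Submodule.eq_of_le_of_finrank_eq hBA (hB.trans hA.symm)).symm
  have hlt := Submodule.finrank_lt_finrank_of_lt hA_lt
  have hle := (A ⊔ B).finrank_le
  have hsum := Submodule.finrank_sup_add_finrank_inf_eq A B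
  lia

/-- The points of the projective space `PG(V)` lying in the subspace `W`. A point is encoded as a
one-dimensional subspace of `V`, not as an element of `ℙ F V`, so that incidence is `≤`. -/
def projPoints (W : Submodule F V) : Set (Submodule F V) :=
  {p | finrank F p = 1 ∧ p ≤ W}

theorem sep_projPoints_le (W U : Submodule F V) :
    {p ∈ projPoints W | p ≤ U} = projPoints (W ⊓ U) := by
  ext p
  simp only [projPoints, Set.mem_ofPred_eq, le_inf_iff, and_assoc]

theorem projPoints_eq_image_map_subtype (W : Submodule F V) :
    projPoints W = Submodule.map W.subtype '' {H : Submodule F W | finrank F H = 1} := by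
  ext p
  constructor
  · rintro ⟨hp, hpW⟩
    exact ⟨p.comap W.subtype, (Submodule.comapSubtypeEquivOfLe hpW).finrank_eq.trans hp,
      by simpa [Submodule.map_comap_subtype] using hpW⟩
  · rintro ⟨H, hH, rfl⟩
    exact ⟨(Submodule.finrank_map_subtype_eq W H).trans hH, Submodule.map_subtype_le W H⟩

end Subspaces

section FiniteProjectiveSpace

variable {F V : Type*} [Field F] [Finite F] [AddCommGroup V] [Module F V]

theorem ncard_projPoints {k : ℕ} {W : Submodule F V} (hW : finrank F W = k) :
    (projPoints W).ncard = ∑ i ∈ Finset.range k, Nat.card F ^ i := by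
  rw [projPoints_eq_image_map_subtype,
    Set.ncard_image_of_injective _ (Submodule.map_injective_of_injective W.injective_subtype),
    ← Projectivization.card_of_finrank F W hW, Nat.card_congr (Projectivization.equivSubmodule F W)]
  rfl

variable {m : ℕ} {S : Set (Submodule F V)} {π : Submodule F V}

theorem finsum_mem_projPoints_ncard_sep_le (hV : finrank F V = m + 2)
    (hS : ∀ σ ∈ S, finrank F σ = m + 1) (hπ : π ∈ S) :
    ∑ᶠ p ∈ projPoints π, {σ ∈ S | p ≤ σ}.ncard
      = Nat.card F ^ m + S.ncard * ∑ i ∈ Finset.range m, Nat.card F ^ i := by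
  have : Module.Finite F V := finite_of_finrank_pos (by lia)
  have : Finite V := finite_of_finite F
  set M := ∑ i ∈ Finset.range m, Nat.card F ^ i
  have hself : (projPoints (π ⊓ π)).ncard = Nat.card F ^ m + M := by
    rw [inf_idem, ncard_projPoints (hS π hπ), Finset.sum_range_succ, add_comm]
  have hother : ∀ σ ∈ S \ {π}, (projPoints (π ⊓ σ)).ncard = M := fun σ hσ ↦
    ncard_projPoints (finrank_inf_of_finrank_eq_add_one hV (hS π hπ) (hS σ hσ.1) (Ne.symm hσ.2))
  calc ∑ᶠ p ∈ projPoints π, {σ ∈ S | p ≤ σ}.ncard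
      = ∑ᶠ σ ∈ S, (projPoints (π ⊓ σ)).ncard := by
        simp only [finsum_mem_ncard_sep_comm _ (projPoints π).toFinite S.toFinite,
          sep_projPoints_le]
    _ = (projPoints (π ⊓ π)).ncard + ∑ᶠ σ ∈ S \ {π}, (projPoints (π ⊓ σ)).ncard := by
        conv_lhs => rw [← Set.insert_sdiff_self_of_mem hπ]
        exact finsum_mem_insert _ (by simp) (Set.toFinite _)
    _ = (Nat.card F ^ m + M) + (S \ {π}).ncard * M := by
        rw [hself, finsum_mem_congr rfl hother,
          finsum_mem_eq_finite_toFinset_sum _ (Set.toFinite _), Finset.sum_const, smul_eq_mul,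
          Set.ncard_eq_toFinset_card]
    _ = Nat.card F ^ m + S.ncard * M := by
        rw [← Set.ncard_sdiff_singleton_add_one hπ]
        ring

theorem mul_ncard_projPoints_of_two_values (hV : finrank F V = m + 2)
    (hS : ∀ σ ∈ S, finrank F σ = m + 1) {c d : ℕ} (hcd : c + d = Nat.card F ^ m)
    (hdeg : ∀ p ∈ projPoints π, {σ ∈ S | p ≤ σ}.ncard = c ∨ {σ ∈ S | p ≤ σ}.ncard = c + d)
    (hπ : π ∈ S) :
    d * {p ∈ projPoints π | {σ ∈ S | p ≤ σ}.ncard = c}.ncard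
      = (∑ i ∈ Finset.range m, Nat.card F ^ i) * (Nat.card F ^ (m + 1) - S.ncard) := by
  have : Module.Finite F V := finite_of_finrank_pos (by lia)
  have : Finite V := finite_of_finite F
  have hcount := finsum_mem_add_mul_ncard_eq_of_two_values (projPoints π).toFinite hdeg
  rw [finsum_mem_projPoints_ncard_sep_le hV hS hπ, ncard_projPoints (hS π hπ),
    geom_sum_succ, hcd] at hcount
  rw [Nat.mul_sub]
  apply Nat.eq_sub_of_add_eq
  linear_combination hcount

theorem stmt_10_general (k l : ℕ) (hm : m = k + l) (hV : finrank F V = m + 2)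
    (q : ℕ) (hq : Nat.card F = q) (hS : ∀ σ ∈ S, finrank F σ = m + 1) (hπ : π ∈ S)
    (hdeg : ∀ p : Submodule F V, finrank F p = 1 → p ≤ π →
      {σ ∈ S | p ≤ σ}.ncard = q ^ k * (q ^ l - 1) ∨ {σ ∈ S | p ≤ σ}.ncard = q ^ m)
    (r : ℕ) (hr : S.ncard = q ^ k * r) :
    {p : Submodule F V | finrank F p = 1 ∧
      {σ ∈ S | p ≤ σ}.ncard = q ^ k * (q ^ l - 1) ∧ p ≤ π}.ncard
      = ((q ^ m - 1) / (q - 1)) * (q ^ (l + 1) - r) := by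
  subst hq hm
  set q := Nat.card F
  have hq : 1 < q := Finite.one_lt_card
  have hcd : q ^ k * (q ^ l - 1) + q ^ k = q ^ (k + l) := by
    rw [pow_add, Nat.mul_sub_one, Nat.sub_add_cancel (Nat.le_mul_of_pos_right _ (by positivity))]
  have hblack : {p : Submodule F V | finrank F p = 1 ∧
      {σ ∈ S | p ≤ σ}.ncard = q ^ k * (q ^ l - 1) ∧ p ≤ π}
      = {p ∈ projPoints π | {σ ∈ S | p ≤ σ}.ncard = q ^ k * (q ^ l - 1)} := by
    ext p
    simp only [projPoints, Set.mem_ofPred_eq, and_assoc, and_comm (a := p ≤ π)]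
  apply Nat.eq_of_mul_eq_mul_left (pow_pos (zero_lt_one.trans hq) k)
  rw [hblack, mul_ncard_projPoints_of_two_values hV hS hcd
    (fun p hp ↦ by simpa only [hcd] using hdeg p hp.1 hp.2) hπ, ← Nat.geomSum_eq hq, hr,
    add_assoc, pow_add _ k, ← Nat.mul_sub, Nat.mul_left_comm]

end FiniteProjectiveSpace

/-- For `n ≥ 1` and a nonempty family `S` of hyperplanes of `PG(2n+1,q)`
satisfying (P1⁺), writing `|S| = q^n · r`, every hyperplane of `S` contains exactly
`((q^{2n}-1)/(q-1)) · (q^{n+1} - r)` black points. -/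
theorem stmt_10 (n : ℕ) (hn : 1 ≤ n)
    (F : Type) [Field F] [Fintype F] (q : ℕ) (hq : Fintype.card F = q)
    (S : Set (Submodule F (Fin (2*n+2) → F)))
    (hS : S.Nonempty)
    (hhyp : ∀ π ∈ S, Module.finrank F π = 2*n+1)
    (hP1 : ∀ p : Submodule F (Fin (2*n+2) → F), Module.finrank F p = 1 →
      {π ∈ S | p ≤ π}.ncard = q^n * (q^n - 1) ∨ {π ∈ S | p ≤ π}.ncard = q^(2*n))
    (r : ℕ) (hr : S.ncard = q^n * r) :
    ∀ π ∈ S,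
      {p : Submodule F (Fin (2*n+2) → F) | Module.finrank F p = 1 ∧
        {σ ∈ S | p ≤ σ}.ncard = q^n * (q^n - 1) ∧ p ≤ π}.ncard
        = ((q^(2*n) - 1)/(q - 1)) * (q^(n+1) - r) := by
  intro π hπ
  exact stmt_10_general n n (two_mul n) (finrank_fin_fun F) q
    (Nat.card_eq_fintype_card.trans hq) hhyp hπ (fun p hp _ ↦ hP1 p hp) r hr
end

section
/- Let n ≥ 1 and let Σ be a nonempty family of hyperplanes of PG(2n+1,q) satisfying property (P1^−), and write |Σ| = q^n · r. Then every hyperplane π ∈ Σ contains exactly ((q^{2n}−1)/(q−1)) · (r − q^{n+1}) black points. -/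
/-!
Count the pairs `(p, σ)` where `p` is a point of a fixed `π ∈ S` and `p ≤ σ ∈ S`. Summed over `σ`,
the count depends only on `|S|`: a hyperplane `σ ≠ π` meets `π` in codimension two, while `σ = π`
contributes all the points of `π`. Summed over `p`, each point contributes the smaller of its two
possible degrees, and each black point contributes the difference of the two degrees on top of
that. Comparing the two sums determines the number of black points.
-/

open Finset Module

theorem sum_eq_card_nsmul_add_card_filter_nsmul {ι M : Type*} [AddCommMonoid M] [DecidableEq M]
    {s : Finset ι} {f : ι → M} {a c : M} (h : ∀ i ∈ s, f i = a + c ∨ f i = a) :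
    ∑ i ∈ s, f i = #s • a + #{i ∈ s | f i = a + c} • c := by
  have hf : ∀ i ∈ s, f i = a + if f i = a + c then c else 0 := fun i hi ↦ by
    split_ifs with hi'
    · exact hi'
    · simpa using (h i hi).resolve_left hi'
  rw [sum_congr rfl hf, sum_add_distrib, sum_const, ← sum_filter, sum_const]

section DivisionRing

variable {K V : Type*} [DivisionRing K] [AddCommGroup V] [Module K V]

theorem finrank_inf_add_two_of_hyperplanes_ne [FiniteDimensional K V] {H₁ H₂ : Submodule K V}
    (h₁ : finrank K H₁ + 1 = finrank K V) (h₂ : finrank K H₂ + 1 = finrank K V) (hne : H₁ ≠ H₂) :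
    finrank K ↥(H₁ ⊓ H₂) + 2 = finrank K V := by
  have hdim := Submodule.finrank_sup_add_finrank_inf_eq H₁ H₂
  have hsup : finrank K H₁ < finrank K ↥(H₁ ⊔ H₂) := by
    refine Submodule.finrank_lt_finrank_of_lt (left_lt_sup.2 fun hle ↦ hne ?_)
    exact (Submodule.eq_of_le_of_finrank_eq hle (by omega)).symm
  have hle := (H₁ ⊔ H₂).finrank_le
  omega

/-- The points of the projective space of `V` that lie in the subspace `W`, a point being encoded
as a one-dimensional subspace of `V`. -/
noncomputable def pointsIn [Finite V] (W : Submodule K V) : Finset (Submodule K V) :=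
  (Set.toFinite {p : Submodule K V | finrank K p = 1 ∧ p ≤ W}).toFinset

variable [Finite V] {W p : Submodule K V}

theorem mem_pointsIn : p ∈ pointsIn W ↔ finrank K p = 1 ∧ p ≤ W := by
  simp [pointsIn]

theorem coe_pointsIn :
    (pointsIn W : Set (Submodule K V)) =
      Submodule.map W.subtype '' {p : Submodule K W | finrank K p = 1} := by
  ext p
  simp only [SetLike.mem_coe, mem_pointsIn, Set.mem_image, Set.mem_ofPred_eq]
  constructor
  · rintro ⟨hp, hpW⟩
    have hmap : (p.comap W.subtype).map W.subtype = p := by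
      rw [Submodule.map_comap_subtype, inf_eq_right.2 hpW]
    exact ⟨p.comap W.subtype, by rwa [← Submodule.finrank_map_subtype_eq, hmap], hmap⟩
  · rintro ⟨p, hp, rfl⟩
    exact ⟨by rwa [Submodule.finrank_map_subtype_eq], Submodule.map_subtype_le W p⟩

open scoped Classical in
theorem sum_pointsIn_card_filter_le (W : Submodule K V) (S : Finset (Submodule K V)) :
    ∑ p ∈ pointsIn W, #{σ ∈ S | p ≤ σ} = ∑ σ ∈ S, #(pointsIn (W ⊓ σ)) := by
  have hfilter (σ : Submodule K V) : pointsIn (W ⊓ σ) = {p ∈ pointsIn W | p ≤ σ} := by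
    ext p
    simp only [mem_filter, mem_pointsIn, le_inf_iff, and_assoc]
  simp only [hfilter]
  exact sum_card_bipartiteAbove_eq_sum_card_bipartiteBelow (· ≤ ·)

end DivisionRing

section Field

variable {K V : Type*} [Field K] [Finite K] [AddCommGroup V] [Module K V]

theorem card_pointsIn [Finite V] (W : Submodule K V) :
    #(pointsIn W) = ∑ i ∈ range (finrank K W), Nat.card K ^ i := by
  rw [← Set.ncard_coe_finset, coe_pointsIn,
    Set.ncard_image_of_injective _ (Submodule.map_injective_of_injective W.subtype_injective),
    ← Projectivization.card_of_finrank K W rfl,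
    Nat.card_congr (Projectivization.equivSubmodule K W)]
  rfl

theorem sum_card_pointsIn_inf_hyperplanes [Finite V] {m : ℕ} (hV : finrank K V = m + 2)
    {S : Finset (Submodule K V)} (hS : ∀ σ ∈ S, finrank K σ = m + 1) {π : Submodule K V}
    (hπ : π ∈ S) :
    ∑ σ ∈ S, #(pointsIn (π ⊓ σ)) =
      #S * ∑ i ∈ range m, Nat.card K ^ i + Nat.card K ^ m := by
  classical
  have hinter : ∀ σ ∈ S, #(pointsIn (π ⊓ σ)) =
      ∑ i ∈ range m, Nat.card K ^ i + if π = σ then Nat.card K ^ m else 0 := fun σ hσ ↦ by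
    split_ifs with h
    · rw [← h, inf_idem, card_pointsIn, hS π hπ, sum_range_succ]
    · have hdim := finrank_inf_add_two_of_hyperplanes_ne (by rw [hS π hπ, hV])
        (by rw [hS σ hσ, hV]) h
      rw [card_pointsIn, show finrank K ↥(π ⊓ σ) = m by omega, add_zero]
  rw [sum_congr rfl hinter, sum_add_distrib, sum_const, smul_eq_mul, sum_ite_eq, if_pos hπ]

open scoped Classical in
theorem card_filter_pointsIn_mul_add [Finite V] {m c : ℕ} (hV : finrank K V = m + 2)
    {S : Finset (Submodule K V)} (hS : ∀ σ ∈ S, finrank K σ = m + 1) {π : Submodule K V}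
    (hπ : π ∈ S) (hdeg : ∀ p ∈ pointsIn π,
      #{σ ∈ S | p ≤ σ} = Nat.card K ^ m + c ∨ #{σ ∈ S | p ≤ σ} = Nat.card K ^ m) :
    #{p ∈ pointsIn π | #{σ ∈ S | p ≤ σ} = Nat.card K ^ m + c} * c +
        (∑ i ∈ range m, Nat.card K ^ i) * Nat.card K ^ (m + 1) =
      (∑ i ∈ range m, Nat.card K ^ i) * #S := by
  have hcount := (sum_eq_card_nsmul_add_card_filter_nsmul hdeg).symm.trans <|
    (sum_pointsIn_card_filter_le π S).trans (sum_card_pointsIn_inf_hyperplanes hV hS hπ)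
  rw [card_pointsIn, hS π hπ, geom_sum_succ, smul_eq_mul, smul_eq_mul] at hcount
  linear_combination hcount

theorem stmt_11_general {k l m q : ℕ} (hm : k + l = m) (hq : Nat.card K = q)
    (hV : finrank K V = m + 2) {S : Set (Submodule K V)} (hS : ∀ σ ∈ S, finrank K σ = m + 1)
    {π : Submodule K V} (hπ : π ∈ S)
    (hdeg : ∀ p ≤ π, finrank K p = 1 →
      {σ ∈ S | p ≤ σ}.ncard = q ^ k * (q ^ l + 1) ∨ {σ ∈ S | p ≤ σ}.ncard = q ^ m)
    {r : ℕ} (hr : S.ncard = q ^ k * r) :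
    {p : Submodule K V | finrank K p = 1 ∧
        {σ ∈ S | p ≤ σ}.ncard = q ^ k * (q ^ l + 1) ∧ p ≤ π}.ncard =
      (q ^ m - 1) / (q - 1) * (r - q ^ (l + 1)) := by
  classical
  have : Module.Finite K V := finite_of_finrank_pos (by omega)
  have : Finite V := Module.finite_of_finite K
  have hdegree : q ^ k * (q ^ l + 1) = q ^ m + q ^ k := by rw [mul_add_one, ← pow_add, hm]
  lift S to Finset (Submodule K V) using S.toFinite
  simp only [hdegree, mem_coe, ← coe_filter, Set.ncard_coe_finset] at hS hπ hdeg hr ⊢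
  have hblack : {p : Submodule K V | finrank K p = 1 ∧
      #{σ ∈ S | p ≤ σ} = q ^ m + q ^ k ∧ p ≤ π} =
      ({p ∈ pointsIn π | #{σ ∈ S | p ≤ σ} = q ^ m + q ^ k} : Finset (Submodule K V)) := by
    ext p
    rw [mem_coe, mem_filter, mem_pointsIn, and_assoc, and_comm (a := p ≤ π)]
    rfl
  subst hq hm
  have hcount := card_filter_pointsIn_mul_add hV hS hπ fun p hp ↦
    hdeg p (mem_pointsIn.1 hp).2 (mem_pointsIn.1 hp).1
  rw [hr] at hcount
  rw [hblack, Set.ncard_coe_finset, ← Nat.geomSum_eq Finite.one_lt_card, Nat.mul_sub]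
  refine Nat.eq_sub_of_add_eq (Nat.eq_of_mul_eq_mul_right (pow_pos (Nat.card_pos (α := K)) k) ?_)
  linear_combination hcount

end Field

/-- For `n ≥ 1` and a nonempty family `S` of hyperplanes of `PG(2n+1,q)`
satisfying (P1⁻), writing `|S| = q^n · r`, every hyperplane of `S` contains exactly
`((q^{2n}-1)/(q-1)) · (r - q^{n+1})` black points. -/
theorem stmt_11 (n : ℕ) (hn : 1 ≤ n)
    (F : Type) [Field F] [Fintype F] (q : ℕ) (hq : Fintype.card F = q)
    (S : Set (Submodule F (Fin (2*n+2) → F)))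
    (hS : S.Nonempty)
    (hhyp : ∀ π ∈ S, Module.finrank F π = 2*n+1)
    (hP1 : ∀ p : Submodule F (Fin (2*n+2) → F), Module.finrank F p = 1 →
      {π ∈ S | p ≤ π}.ncard = q^n * (q^n + 1) ∨ {π ∈ S | p ≤ π}.ncard = q^(2*n))
    (r : ℕ) (hr : S.ncard = q^n * r) :
    ∀ π ∈ S,
      {p : Submodule F (Fin (2*n+2) → F) | Module.finrank F p = 1 ∧
        {σ ∈ S | p ≤ σ}.ncard = q^n * (q^n + 1) ∧ p ≤ π}.ncard
        = ((q^(2*n) - 1)/(q - 1)) * (r - q^(n+1)) := by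
  exact fun π hπ ↦ stmt_11_general (two_mul n).symm (Nat.card_eq_fintype_card.trans hq)
    (Module.finrank_fin_fun F) hhyp hπ (fun p _ ↦ hP1 p) hr
end

section
/- Let q be a prime power and let Σ be a nonempty family of planes of PG(3,q) such that every point of PG(3,q) lies in exactly q²+q or exactly q² planes of Σ. Then |Σ| = q³ + q² or |Σ| = q³ + q. -/
/-!
Every nonzero vector lies in `q² + q` or `q²` members of the family `S`, so
`(deg v - (q² + q)) * (deg v - q²)` vanishes for every vector `v` except `v = 0`, which lies in all
`|S|` planes. Summing over all vectors, and double counting incidences and pairs of incidences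
(two distinct planes share a line, that is, `q²` vectors), gives a quadratic equation for `|S|`,
namely `(q² - 1) * (|S| - (q³ + q²)) * (|S| - (q³ + q)) = 0`.
-/

section

open Finset Module

variable {F V : Type*} [DivisionRing F] [AddCommGroup V] [Module F V]

open Classical in
/-- The number of members of a finite family of subspaces that contain the vector `v`. For
`v ≠ 0` this is the number of members through the projective point spanned by `v`; admitting
`v = 0` turns incidence counts into sums over a whole vector space. -/
noncomputable def incidenceDegree (T : Finset (Submodule F V)) (v : V) : ℕ :=
  #{W ∈ T | v ∈ W}

theorem incidenceDegree_zero (T : Finset (Submodule F V)) : incidenceDegree T 0 = #T := by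
  simp [incidenceDegree]

open Classical in
theorem incidenceDegree_sq (T : Finset (Submodule F V)) (v : V) :
    incidenceDegree T v ^ 2 = #{P ∈ T ×ˢ T | v ∈ P.1 ⊓ P.2} := by
  simp only [incidenceDegree, sq, ← card_product, ← filter_product, Submodule.mem_inf]

theorem ncard_span_singleton_le_eq_incidenceDegree (T : Finset (Submodule F V)) (v : V) :
    {W ∈ (T : Set (Submodule F V)) | Submodule.span F {v} ≤ W}.ncard = incidenceDegree T v := by
  simp only [incidenceDegree, ← Set.ncard_coe_finset, coe_filter, mem_coe,
    Submodule.span_singleton_le_iff_mem]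

theorem sum_card_filter_mem_submodule [Fintype V] {ι : Type*} (s : Finset ι)
    (U : ι → Submodule F V) [∀ v, DecidablePred fun i => v ∈ U i] :
    ∑ v, #{i ∈ s | v ∈ U i} = ∑ i ∈ s, Nat.card F ^ finrank F (U i) := by
  have card_submodule (i : ι) : #{v | v ∈ U i} = Nat.card F ^ finrank F (U i) := by
    rw [← natCard_eq_pow_finrank (K := F), Nat.card_eq_fintype_card, Fintype.card_subtype]
  calc ∑ v, #{i ∈ s | v ∈ U i}
      = ∑ i ∈ s, #{v | v ∈ U i} :=
        sum_card_bipartiteAbove_eq_sum_card_bipartiteBelow fun v i => v ∈ U i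
    _ = ∑ i ∈ s, Nat.card F ^ finrank F (U i) := sum_congr rfl fun i _ => card_submodule i

variable {T : Finset (Submodule F V)} {k m : ℕ}

theorem sum_incidenceDegree [Fintype V] (hT : ∀ W ∈ T, finrank F W = k) :
    ∑ v, incidenceDegree T v = #T * Nat.card F ^ k := by
  simp only [incidenceDegree, sum_card_filter_mem_submodule]
  exact sum_const_nat fun W hW => by rw [hT W hW]

theorem sum_incidenceDegree_sq [Fintype V] (hT : ∀ W ∈ T, finrank F W = k)
    (hinf : (T : Set (Submodule F V)).Pairwise
      fun W W' => finrank F (W ⊓ W' : Submodule F V) = m) :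
    ∑ v, incidenceDegree T v ^ 2 =
      #T * Nat.card F ^ k + #T * (#T - 1) * Nat.card F ^ m := by
  classical
  simp only [incidenceDegree_sq]
  rw [sum_card_filter_mem_submodule, ← diag_union_offDiag, sum_union (disjoint_diag_offDiag T)]
  congr 1
  · rw [sum_diag]
    exact sum_const_nat fun W hW => by rw [inf_idem, hT W hW]
  · rw [Nat.mul_sub_one, ← offDiag_card]
    refine sum_const_nat fun P hP => ?_
    obtain ⟨hP₁, hP₂, hne⟩ := mem_offDiag.mp hP
    rw [hinf hP₁ hP₂ hne]

theorem card_sub_mul_card_sub_of_two_incidenceDegrees [Finite V] {a b : ℕ}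
    (hT : ∀ W ∈ T, finrank F W = k)
    (hinf : (T : Set (Submodule F V)).Pairwise
      fun W W' => finrank F (W ⊓ W' : Submodule F V) = m)
    (hdeg : ∀ v ≠ 0, incidenceDegree T v = a ∨ incidenceDegree T v = b) :
    ((#T : ℤ) - a) * (#T - b) =
      #T * (Nat.card F : ℤ) ^ k + #T * (#T - 1) * (Nat.card F : ℤ) ^ m
        - (a + b) * (#T * (Nat.card F : ℤ) ^ k) + a * b * (Nat.card F : ℤ) ^ finrank F V := by
  have := Fintype.ofFinite V
  have first_moment : ∑ v, (incidenceDegree T v : ℤ) = #T * (Nat.card F : ℤ) ^ k :=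
    mod_cast sum_incidenceDegree hT
  have second_moment : ∑ v, (incidenceDegree T v : ℤ) ^ 2 =
      #T * (Nat.card F : ℤ) ^ k + #T * (#T - 1) * (Nat.card F : ℤ) ^ m := by
    have natCast_mul_pred (n : ℕ) : ((n * (n - 1) : ℕ) : ℤ) = n * (n - 1) := by
      cases n <;> simp
    rw [← natCast_mul_pred]
    exact_mod_cast sum_incidenceDegree_sq hT hinf
  have card_vectors : (Fintype.card V : ℤ) = (Nat.card F : ℤ) ^ finrank F V := by
    rw [← Nat.card_eq_fintype_card, natCard_eq_pow_finrank (K := F), Nat.cast_pow]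
  have vanish (v : V) (hv : v ≠ 0) :
      ((incidenceDegree T v : ℤ) - a) * (incidenceDegree T v - b) = 0 := by
    rcases hdeg v hv with h | h <;> simp [h]
  calc ((#T : ℤ) - a) * (#T - b)
      = ∑ v, ((incidenceDegree T v : ℤ) - a) * (incidenceDegree T v - b) := by
        rw [Fintype.sum_eq_single 0 vanish, incidenceDegree_zero]
    _ = ∑ v, ((incidenceDegree T v : ℤ) ^ 2 - (a + b) * incidenceDegree T v + a * b) :=
        sum_congr rfl fun v _ => by ring
    _ = _ := by
        rw [sum_add_distrib, sum_sub_distrib, ← mul_sum, first_moment, second_moment, sum_const,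
          card_univ, nsmul_eq_mul, card_vectors]
        ring

theorem finrank_inf_add_two_of_hyperplanes_ne_s16 {W W' : Submodule F V}
    (hW : finrank F W + 1 = finrank F V) (hW' : finrank F W' + 1 = finrank F V) (hne : W ≠ W') :
    finrank F (W ⊓ W' : Submodule F V) + 2 = finrank F V := by
  have : FiniteDimensional F V := .of_finrank_pos (by omega)
  have hlt : W < W ⊔ W' := left_lt_sup.mpr fun hle =>
    hne (Submodule.eq_of_le_of_finrank_eq hle (by omega)).symm
  have := Submodule.finrank_lt_finrank_of_lt hlt
  have := Submodule.finrank_le (W ⊔ W')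
  have := Submodule.finrank_sup_add_finrank_inf_eq W W'
  omega

theorem stmt_16_general [Finite F] {q : ℕ} (hq : Nat.card F = q) (hV : finrank F V = 4)
    {S : Set (Submodule F V)} (hplane : ∀ π ∈ S, finrank F π = 3)
    (hpoint : ∀ p : Submodule F V, finrank F p = 1 →
      {π ∈ S | p ≤ π}.ncard = q ^ 2 + q ∨ {π ∈ S | p ≤ π}.ncard = q ^ 2) :
    S.ncard = q ^ 3 + q ^ 2 ∨ S.ncard = q ^ 3 + q := by
  have : FiniteDimensional F V := .of_finrank_pos (by omega)
  have : Finite V := finite_of_finite F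
  lift S to Finset (Submodule F V) using S.toFinite
  have hline : (S : Set (Submodule F V)).Pairwise
      fun π π' => finrank F (π ⊓ π' : Submodule F V) = 2 := fun π hπ π' hπ' hne => by
    have := finrank_inf_add_two_of_hyperplanes_ne_s16 (by rw [hplane π hπ, hV])
      (by rw [hplane π' hπ', hV]) hne
    omega
  have hdeg (v : V) (hv : v ≠ 0) :
      incidenceDegree S v = q ^ 2 + q ∨ incidenceDegree S v = q ^ 2 := by
    simpa only [ncard_span_singleton_le_eq_incidenceDegree] using
      hpoint (F ∙ v) (finrank_span_singleton hv)
  have hcount := card_sub_mul_card_sub_of_two_incidenceDegrees hplane hline hdeg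
  rw [hq, hV] at hcount
  push_cast at hcount
  have hquad : ((q : ℤ) ^ 2 - 1) * ((#S - (q ^ 3 + q ^ 2)) * (#S - (q ^ 3 + q))) = 0 := by
    linear_combination -hcount
  have hq_sq : (q : ℤ) ^ 2 - 1 ≠ 0 := by
    have : 1 < (q : ℤ) := mod_cast hq ▸ Finite.one_lt_card (α := F)
    nlinarith
  rw [Set.ncard_coe_finset]
  refine (mul_eq_zero.mp ((mul_eq_zero.mp hquad).resolve_left hq_sq)).imp ?_ ?_
  all_goals exact fun h => by exact_mod_cast sub_eq_zero.mp h

end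

/-- For a prime power `q` and a nonempty family `S` of planes of `PG(3,q)` in
which every point lies in exactly `q²+q` or `q²` planes of `S`, one has `|S| = q³+q²` or
`|S| = q³+q`. -/
theorem stmt_16 (F : Type) [Field F] [Fintype F] (q : ℕ) (hq : Fintype.card F = q)
    (S : Set (Submodule F (Fin 4 → F)))
    (hS : S.Nonempty)
    (hplane : ∀ π ∈ S, Module.finrank F π = 3)
    (hP1 : ∀ p : Submodule F (Fin 4 → F), Module.finrank F p = 1 →
      {π ∈ S | p ≤ π}.ncard = q^2 + q ∨ {π ∈ S | p ≤ π}.ncard = q^2) :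
    S.ncard = q^3 + q^2 ∨ S.ncard = q^3 + q :=
  stmt_16_general (Nat.card_eq_fintype_card.trans hq) (Module.finrank_fin_fun F) hplane hP1
end

section
/- Let n ≥ 2 and let Σ be a nonempty family of hyperplanes of PG(2n+1,q) satisfying properties (P1^+) and (P2). Then every subspace of codimension 2 of PG(2n+1,q) contains exactly c₁, c₂, c₃ or c₄ black points, where c₁ = (q^n+1)(q^{n−1}−1)/(q−1), c₂ = 1 + q(q^{2n−2}−1)/(q−1), c₃ = (q^n−1)(q^{n−1}+1)/(q−1), and c₄ = 1 + q + q²(q^{n−1}−1)(q^{n−2}+1)/(q−1). -/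
/-!
Let `a = qⁿ(qⁿ - 1)` and `b = q²ⁿ` be the two counts in (P1⁺), and count nonzero vectors rather
than points. Summing `(μ(v) - a)(μ(v) - b)` over all vectors `v`, where `μ(v)` is the number of
members of `Σ` containing `v`, only leaves the term `v = 0`, where `μ(0) = |Σ|`; evaluating the sum
by double counting gives a quadratic equation for `|Σ|`, whose only integral root is
`qⁿ(qⁿ⁺¹ - 1)`. Summing `b - μ(v)` over a subspace `W` of codimension 2 then expresses the number of
black points of `W` through the number `x` of members of `Σ` containing `W`. There are only `q + 1`
hyperplanes through `W`, so (P2) leaves `x ∈ {0, q - 1, q, q + 1}`, which gives `c₄`, `c₃`, `c₂` and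
`c₁` respectively.
-/

open Module
open scoped Finset

section Hyperplanes

variable {F V : Type*} [Field F] [AddCommGroup V] [Module F V]

theorem isCoatom_iff_finrank_add_one_eq [FiniteDimensional F V] {π : Submodule F V} :
    IsCoatom π ↔ finrank F π + 1 = finrank F V := by
  rw [← isSimpleModule_iff_isCoatom, isSimpleModule_iff_finrank_eq_one,
    ← π.finrank_quotient_add_finrank]
  omega

theorem finrank_inf_add_one_of_isCoatom [FiniteDimensional F V] {π U : Submodule F V}
    (hπ : IsCoatom π) (hU : ¬ U ≤ π) :
    finrank F (π ⊓ U : Submodule F V) + 1 = finrank F U := by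
  have hsup : π ⊔ U = ⊤ := codisjoint_iff.1 (hπ.not_le_iff_codisjoint.1 hU)
  have hdim := Submodule.finrank_sup_add_finrank_inf_eq π U
  rw [hsup, finrank_top, ← isCoatom_iff_finrank_add_one_eq.1 hπ] at hdim
  omega

theorem ncard_setOf_finrank_eq_one :
    {p : Submodule F V | finrank F p = 1}.ncard = Nat.card (Projectivization F V) :=
  (Nat.card_congr (Projectivization.equivSubmodule F V)).symm

theorem ncard_setOf_isCoatom_and_ge [Finite F] {W : Submodule F V}
    (hW : finrank F (V ⧸ W) = 2) :
    {π | IsCoatom π ∧ W ≤ π}.ncard = Nat.card F + 1 := by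
  have : FiniteDimensional F (V ⧸ W) := .of_finrank_eq_succ hW
  have hcomap : {π | IsCoatom π ∧ W ≤ π} =
      Submodule.comap W.mkQ '' {p : Submodule F (V ⧸ W) | finrank F p = 1} := by
    have hatom (p : Submodule F (V ⧸ W)) : IsCoatom (p.comap W.mkQ) ↔ finrank F p = 1 := by
      rw [Submodule.isCoatom_comap_iff W.mkQ_surjective, isCoatom_iff_finrank_add_one_eq, hW]
      omega
    ext π
    constructor
    · rintro ⟨hπ, hWπ⟩
      have hmap : (π.map W.mkQ).comap W.mkQ = π := by
        rw [Submodule.comap_map_mkQ, sup_eq_right.2 hWπ]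
      exact ⟨π.map W.mkQ, (hatom _).1 (hmap.symm ▸ hπ), hmap⟩
    · rintro ⟨p, hp, rfl⟩
      exact ⟨(hatom p).2 hp, W.le_comap_mkQ p⟩
  have hinj := Submodule.comap_injective_of_surjective W.mkQ_surjective
  rw [hcomap, Set.ncard_image_of_injective _ hinj,
    ncard_setOf_finrank_eq_one, Projectivization.card_of_finrank_two F _ hW]

open scoped Classical in
theorem card_filter_mem_submodule [Fintype V] (U : Submodule F V) :
    #{v | v ∈ U} = Nat.card F ^ finrank F U := by
  rw [← Module.natCard_eq_pow_finrank, Nat.card_eq_fintype_card, Fintype.card_subtype]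

open scoped Classical in
theorem filter_span_singleton_eq [Fintype V] {p : Submodule F V} (hp : finrank F p = 1) :
    ({v | v ≠ 0 ∧ F ∙ v = p} : Finset V) = ({v | v ∈ p} : Finset V).erase 0 := by
  ext v
  simp only [Finset.mem_filter, Finset.mem_univ, true_and, Finset.mem_erase]
  refine and_congr_right fun hv ↦
    ⟨fun h ↦ h ▸ Submodule.mem_span_singleton_self v, fun h ↦ ?_⟩
  exact Submodule.eq_of_le_of_finrank_eq ((Submodule.span_singleton_le_iff_mem v p).2 h)
    (by rw [finrank_span_singleton hv, hp])

open scoped Classical in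
theorem card_filter_span_singleton [Fintype V] (P : Submodule F V → Prop) :
    #{v : V | v ≠ 0 ∧ P (F ∙ v)} =
      {p : Submodule F V | finrank F p = 1 ∧ P p}.ncard * (Nat.card F - 1) := by
  have hP := {p : Submodule F V | finrank F p = 1 ∧ P p}.toFinite
  rw [Set.ncard_eq_toFinset_card _ hP,
    Finset.card_eq_sum_card_fiberwise (f := fun v : V ↦ F ∙ v) (t := hP.toFinset)]
  · refine Finset.sum_const_nat fun p hp ↦ ?_
    obtain ⟨hp1, hpP⟩ := hP.mem_toFinset.1 hp
    have hfiber : ({v ∈ ({v | v ≠ 0 ∧ P (F ∙ v)} : Finset V) | F ∙ v = p} : Finset V) =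
        ({v | v ∈ p} : Finset V).erase 0 := by
      rw [← filter_span_singleton_eq hp1, Finset.filter_filter]
      refine Finset.filter_congr fun v _ ↦ ⟨fun h ↦ ⟨h.1.1, h.2⟩, ?_⟩
      rintro ⟨hv, rfl⟩
      exact ⟨⟨hv, hpP⟩, rfl⟩
    rw [hfiber, Finset.card_erase_of_mem (by simp), card_filter_mem_submodule, hp1, pow_one]
  · intro v hv
    obtain ⟨hv0, hvP⟩ := (Finset.mem_filter.1 hv).2
    exact hP.mem_toFinset.2 ⟨finrank_span_singleton hv0, hvP⟩

end Hyperplanes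

section IncidenceCount

variable {F V : Type*} [Field F] [AddCommGroup V] [Module F V]

/-- The number of members of the family `S` that contain the subspace `U`; for a point `U` this is
the multiplicity occurring in (P1⁺). -/
noncomputable def incidenceCount (S : Set (Submodule F V)) (U : Submodule F V) : ℕ :=
  {π ∈ S | U ≤ π}.ncard

/-- The points (one-dimensional subspaces) of `W` that lie in exactly `a` members of `S`; the black
points of `W` are those with `a = qⁿ(qⁿ - 1)`. -/
def pointsOfIncidenceCount (S : Set (Submodule F V)) (a : ℕ) (W : Submodule F V) :
    Set (Submodule F V) :=
  {p | finrank F p = 1 ∧ incidenceCount S p = a ∧ p ≤ W}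

variable {S : Set (Submodule F V)}

theorem incidenceCount_bot : incidenceCount S ⊥ = S.ncard := by
  simp [incidenceCount]

theorem incidenceCount_top (hS : ∀ π ∈ S, IsCoatom π) : incidenceCount S ⊤ = 0 := by
  have hempty : {π ∈ S | ⊤ ≤ π} = ∅ :=
    Set.eq_empty_of_forall_notMem fun π hπ ↦ (hS π hπ.1).ne_top (top_le_iff.1 hπ.2)
  rw [incidenceCount, hempty, Set.ncard_empty]

theorem incidenceCount_of_mem (hS : ∀ π ∈ S, IsCoatom π) {π : Submodule F V} (hπ : π ∈ S) :
    incidenceCount S π = 1 := by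
  have hsingleton : {σ ∈ S | π ≤ σ} = {π} := by
    ext σ
    refine ⟨fun hσ ↦ ((hS π hπ).le_iff_eq (hS σ hσ.1).ne_top).1 hσ.2, ?_⟩
    rintro rfl
    exact ⟨hπ, le_rfl⟩
  rw [incidenceCount, hsingleton, Set.ncard_singleton]

theorem incidenceCount_le_card_add_one [Finite F] (hS : ∀ π ∈ S, IsCoatom π)
    {W : Submodule F V} (hW : finrank F (V ⧸ W) = 2) :
    incidenceCount S W ≤ Nat.card F + 1 := by
  have hcard := ncard_setOf_isCoatom_and_ge hW
  rw [← hcard]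
  exact Set.ncard_le_ncard (fun π hπ ↦ ⟨hS π hπ.1, hπ.2⟩)
    (Set.finite_of_ncard_pos (hcard ▸ Nat.succ_pos _))

theorem incidenceCount_eq_or_of_codim_two [Finite F] (hS : ∀ π ∈ S, IsCoatom π)
    {W : Submodule F V} (hW : finrank F (V ⧸ W) = 2)
    (hP2 : (∃ π ∈ S, W ≤ π) → Nat.card F - 1 ≤ incidenceCount S W) :
    incidenceCount S W = 0 ∨ incidenceCount S W = Nat.card F - 1 ∨
      incidenceCount S W = Nat.card F ∨ incidenceCount S W = Nat.card F + 1 := by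
  have hle := incidenceCount_le_card_add_one hS hW
  rcases eq_or_ne (incidenceCount S W) 0 with h0 | h0
  · exact .inl h0
  · have hge := hP2 (Set.nonempty_of_ncard_ne_zero h0)
    omega

open scoped Classical in
theorem incidenceCount_eq_sum [Finite V] (S : Set (Submodule F V)) (U : Submodule F V) :
    (incidenceCount S U : ℤ) = ∑ π ∈ S.toFinite.toFinset, if U ≤ π then 1 else 0 := by
  rw [Finset.sum_boole, incidenceCount, Set.ncard_eq_toFinset_card _ (Set.toFinite _)]
  congr 2
  ext π
  simp

open scoped Classical in
theorem sum_mul_incidenceCount [Finite V] (S : Set (Submodule F V)) (s : Finset V) (f : V → ℤ) :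
    ∑ v ∈ s, f v * incidenceCount S (F ∙ v) =
      ∑ π ∈ S.toFinite.toFinset, ∑ v ∈ s with v ∈ π, f v := by
  simp only [incidenceCount_eq_sum, Finset.mul_sum, Submodule.span_singleton_le_iff_mem, mul_ite,
    mul_one, mul_zero, Finset.sum_filter]
  exact Finset.sum_comm

section Fintype

variable [Fintype V]

open scoped Classical in
theorem card_mul_card_filter_mem_and_mem {π : Submodule F V} (hπ : IsCoatom π) (U : Submodule F V) :
    (Nat.card F : ℤ) * #{v | v ∈ U ∧ v ∈ π} =
      Nat.card F ^ finrank F U * (1 + (Nat.card F - 1) * if U ≤ π then 1 else 0) := by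
  have hcard : #{v | v ∈ U ∧ v ∈ π} = Nat.card F ^ finrank F (π ⊓ U : Submodule F V) := by
    rw [← card_filter_mem_submodule]
    simp only [Submodule.mem_inf, and_comm]
  rw [hcard, Nat.cast_pow]
  split_ifs with hU
  · rw [inf_eq_right.2 hU]
    ring
  · rw [← finrank_inf_add_one_of_isCoatom hπ hU]
    ring

open scoped Classical in
theorem card_mul_sum_incidenceCount (hS : ∀ π ∈ S, IsCoatom π) (U : Submodule F V) :
    (Nat.card F : ℤ) * ∑ v with v ∈ U, (incidenceCount S (F ∙ v) : ℤ) =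
      Nat.card F ^ finrank F U * (S.ncard + (Nat.card F - 1) * incidenceCount S U) := by
  have hdouble := sum_mul_incidenceCount S {v | v ∈ U} 1
  simp only [Pi.one_apply, one_mul, Finset.filter_filter, Finset.sum_const, nsmul_one] at hdouble
  have hinf (π) (hπ : π ∈ S.toFinite.toFinset) :=
    card_mul_card_filter_mem_and_mem (hS π (S.toFinite.mem_toFinset.1 hπ)) U
  rw [hdouble, Finset.mul_sum, Finset.sum_congr rfl hinf,
    ← Finset.mul_sum, Finset.sum_add_distrib, ← Finset.mul_sum, ← incidenceCount_eq_sum,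
    Finset.sum_const, nsmul_one, Set.ncard_eq_toFinset_card]

theorem card_mul_sum_univ_incidenceCount (hS : ∀ π ∈ S, IsCoatom π) :
    (Nat.card F : ℤ) * ∑ v : V, (incidenceCount S (F ∙ v) : ℤ) =
      Nat.card F ^ finrank F V * S.ncard := by
  have htop := card_mul_sum_incidenceCount hS ⊤
  simpa only [Submodule.mem_top, Finset.filter_true, finrank_top, incidenceCount_top hS,
    Nat.cast_zero, mul_zero, add_zero] using htop

theorem card_sq_mul_sum_incidenceCount_sq (hS : ∀ π ∈ S, IsCoatom π) :
    (Nat.card F : ℤ) ^ 2 * ∑ v : V, (incidenceCount S (F ∙ v) : ℤ) ^ 2 =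
      Nat.card F ^ finrank F V * (S.ncard * (S.ncard + Nat.card F - 1)) := by
  classical
  have hπ (π) (hπ : π ∈ S.toFinite.toFinset) :
      (Nat.card F : ℤ) ^ 2 * ∑ v with v ∈ π, (incidenceCount S (F ∙ v) : ℤ) =
        Nat.card F ^ finrank F V * (S.ncard + Nat.card F - 1) := by
    rw [S.toFinite.mem_toFinset] at hπ
    rw [sq, mul_assoc, card_mul_sum_incidenceCount hS, incidenceCount_of_mem hS hπ,
      ← isCoatom_iff_finrank_add_one_eq.1 (hS π hπ)]
    push_cast
    ring
  simp_rw [sq (incidenceCount S _ : ℤ)]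
  rw [sum_mul_incidenceCount, Finset.mul_sum, Finset.sum_congr rfl hπ, Finset.sum_const,
    nsmul_eq_mul, Set.ncard_eq_toFinset_card]
  ring

open scoped Classical in
theorem card_filter_mem_and_incidenceCount_eq (S : Set (Submodule F V)) (a : ℕ)
    (W : Submodule F V) :
    #{v | v ∈ W ∧ v ≠ 0 ∧ incidenceCount S (F ∙ v) = a} =
      (pointsOfIncidenceCount S a W).ncard * (Nat.card F - 1) := by
  rw [pointsOfIncidenceCount, ← card_filter_span_singleton]
  congr 1
  ext v
  simp only [Finset.mem_filter, Submodule.span_singleton_le_iff_mem]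
  tauto

end Fintype

theorem ncard_quadratic_of_incidenceCount_eq_or [Finite V] (hS : ∀ π ∈ S, IsCoatom π) {a b : ℕ}
    (hab : ∀ p : Submodule F V, finrank F p = 1 →
      incidenceCount S p = a ∨ incidenceCount S p = b) :
    (Nat.card F : ℤ) ^ finrank F V * (S.ncard * (S.ncard + Nat.card F - 1) -
        (a + b) * Nat.card F * S.ncard + a * b * Nat.card F ^ 2) =
      Nat.card F ^ 2 * ((S.ncard - a) * (S.ncard - b)) := by
  have := Fintype.ofFinite V
  have hzero : ∑ v : V, ((incidenceCount S (F ∙ v) : ℤ) - a) * (incidenceCount S (F ∙ v) - b) =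
      (S.ncard - a) * (S.ncard - b) := by
    rw [Finset.sum_eq_single_of_mem 0 (Finset.mem_univ _), Submodule.span_zero_singleton,
      incidenceCount_bot]
    intro v _ hv
    rcases hab _ (finrank_span_singleton hv) with h | h <;> simp [h]
  have hexpand : ∑ v : V, ((incidenceCount S (F ∙ v) : ℤ) - a) * (incidenceCount S (F ∙ v) - b) =
      ∑ v : V, (incidenceCount S (F ∙ v) : ℤ) ^ 2 -
        (a + b) * ∑ v : V, (incidenceCount S (F ∙ v) : ℤ) +
        Nat.card F ^ finrank F V * (a * b) := by
    rw [← Nat.cast_pow, ← Module.natCard_eq_pow_finrank (V := V), Nat.card_eq_fintype_card,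
      Finset.mul_sum, ← Finset.sum_sub_distrib, ← Finset.card_univ, ← nsmul_eq_mul,
      ← Finset.sum_const, ← Finset.sum_add_distrib]
    exact Finset.sum_congr rfl fun v _ ↦ by ring
  rw [← hzero, hexpand]
  linear_combination -card_sq_mul_sum_incidenceCount_sq hS +
    (a + b) * Nat.card F * card_mul_sum_univ_incidenceCount hS

theorem card_mul_ncard_pointsOfIncidenceCount [Finite F] [Finite V]
    (hS : ∀ π ∈ S, IsCoatom π) {a b : ℕ}
    (hab : ∀ p : Submodule F V, finrank F p = 1 →
      incidenceCount S p = a ∨ incidenceCount S p = b) (W : Submodule F V) :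
    (Nat.card F : ℤ) * ((b - a) * ((Nat.card F - 1) * (pointsOfIncidenceCount S a W).ncard)) =
      Nat.card F ^ finrank F W *
          (Nat.card F * b - S.ncard - (Nat.card F - 1) * incidenceCount S W) -
        Nat.card F * (b - S.ncard) := by
  classical
  have := Fintype.ofFinite V
  have hdeficiency (v : V) : (b : ℤ) - incidenceCount S (F ∙ v) =
      (if v = 0 then (b : ℤ) - S.ncard else 0) +
        if v ≠ 0 ∧ incidenceCount S (F ∙ v) = a then (b : ℤ) - a else 0 := by
    rcases eq_or_ne v 0 with rfl | hv
    · simp [incidenceCount_bot]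
    · rcases hab _ (finrank_span_singleton hv) with h | h <;> simp +contextual [h, hv]
  have hsum : ∑ v with v ∈ W, ((b : ℤ) - incidenceCount S (F ∙ v)) =
      (b - S.ncard) + (Nat.card F - 1) * (pointsOfIncidenceCount S a W).ncard * (b - a) := by
    have hzero : ({v | v ∈ W ∧ v = 0} : Finset V) = {0} := by
      ext v
      simp +contextual
    rw [Finset.sum_congr rfl fun v _ ↦ hdeficiency v, Finset.sum_add_distrib,
      ← Finset.sum_filter, ← Finset.sum_filter, Finset.filter_filter, Finset.filter_filter,
      hzero, Finset.sum_singleton, Finset.sum_const, card_filter_mem_and_incidenceCount_eq,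
      nsmul_eq_mul, Nat.cast_mul, Nat.cast_pred Nat.card_pos,
      mul_comm (Nat.cast _ : ℤ) (_ - 1)]
  rw [Finset.sum_sub_distrib, Finset.sum_const, card_filter_mem_submodule, nsmul_eq_mul,
    Nat.cast_pow] at hsum
  linear_combination -Nat.card F * hsum - card_mul_sum_incidenceCount hS W

end IncidenceCount

section Arithmetic

theorem eq_mul_sub_one_of_quadratic {N q Q : ℤ} (hq : 2 ≤ q) (hqQ : q ≤ Q)
    (h : Q ^ 2 * q ^ 2 * (N * (N + q - 1) - (Q * (Q - 1) + Q ^ 2) * q * N +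
        Q * (Q - 1) * Q ^ 2 * q ^ 2) =
      q ^ 2 * ((N - Q * (Q - 1)) * (N - Q ^ 2))) :
    N = Q * (q * Q - 1) := by
  have hfactor :
      (q ^ 2 * (Q - 1)) * ((N - Q * (q * Q - 1)) * ((Q + 1) * N - Q ^ 2 * (q * Q + 1))) = 0 := by
    linear_combination h
  have hleft : q ^ 2 * (Q - 1) ≠ 0 := mul_ne_zero (by positivity) (by omega)
  have hroots := (mul_eq_zero.1 hfactor).resolve_left hleft
  refine sub_eq_zero.1 ((mul_eq_zero.1 hroots).resolve_right fun hroot ↦ ?_)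
  -- Modulo `Q + 1` the other root would force `Q ^ 2 * (q * Q + 1) ≡ 1 - q` to vanish.
  have hdvd : Q + 1 ∣ q - 1 :=
    ⟨Q ^ 2 * q - Q * (q - 1) + (q - 1) - N, by linear_combination hroot⟩
  have hle := Int.le_of_dvd (by omega) hdvd
  omega

theorem eq_add_div_of_mul_eq {β a c d : ℕ} (hd : 0 < d) (h : d * β = d * a + c) :
    β = a + c / d := by
  rw [← Nat.mul_add_div hd, ← h, Nat.mul_div_cancel_left _ hd]

/-- The four numbers `c₁`, `c₂`, `c₃`, `c₄`, with divisions in `ℕ` that turn out to be exact. For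
`n = 1` the truncated exponent `n - 2` is harmless: it occurs next to the factor
`q ^ (n - 1) - 1 = 0`. -/
def blackPointCounts (q n : ℕ) : Set ℕ :=
  {(q ^ n + 1) * (q ^ (n - 1) - 1) / (q - 1),
    1 + q * (q ^ (2 * n - 2) - 1) / (q - 1),
    (q ^ n - 1) * (q ^ (n - 1) + 1) / (q - 1),
    1 + q + q ^ 2 * ((q ^ (n - 1) - 1) * (q ^ (n - 2) + 1)) / (q - 1)}

theorem mem_blackPointCounts_of_mul_eq {q n x β : ℕ} (hq : 2 ≤ q) (hn : 1 ≤ n)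
    (hx : x = 0 ∨ x = q - 1 ∨ x = q ∨ x = q + 1)
    (h : (q : ℤ) * ((q - 1) * β) =
      (q ^ n) ^ 2 + q ^ 2 * q ^ n - q * q ^ n - q - (q - 1) * x * q ^ n) :
    β ∈ blackPointCounts q n := by
  obtain ⟨m, rfl⟩ : ∃ m, n = m + 1 := ⟨n - 1, by omega⟩
  have hq1 : 1 ≤ q := by omega
  have hpow (k : ℕ) : 1 ≤ q ^ k := Nat.one_le_pow _ _ hq1
  have hβ : ((q : ℤ) - 1) * β =
      q * (q ^ m) ^ 2 + q ^ 2 * q ^ m - q * q ^ m - 1 - (q - 1) * x * q ^ m :=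
    mul_left_cancel₀ (Nat.cast_ne_zero.2 (by omega : q ≠ 0)) (by linear_combination h)
  have hdiv {a c : ℕ} (hc : ((q : ℤ) - 1) * β = (q - 1) * a + c) : β = a + c / (q - 1) :=
    eq_add_div_of_mul_eq (by omega) (by zify [hq1]; exact hc)
  have hpred : q ^ 2 * ((q ^ m - 1) * (q ^ (m - 1) + 1)) = q * ((q ^ m - 1) * (q ^ m + q)) := by
    cases m with
    | zero => simp
    | succ k => rw [Nat.add_sub_cancel]; ring
  rw [blackPointCounts, show m + 1 - 2 = m - 1 by omega, show 2 * (m + 1) - 2 = 2 * m by omega,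
    Nat.add_sub_cancel, hpred]
  simp only [Set.mem_insert_iff, Set.mem_singleton_iff]
  rcases hx with rfl | rfl | rfl | rfl
  · refine .inr (.inr (.inr (hdiv ?_)))
    push_cast [hpow] at hβ ⊢
    linear_combination hβ
  · refine .inr (.inr (.inl ((hdiv (a := 0) ?_).trans (zero_add _))))
    push_cast [hpow, hq1] at hβ ⊢
    linear_combination hβ
  · refine .inr (.inl (hdiv ?_))
    push_cast [hpow] at hβ ⊢
    linear_combination hβ
  · refine .inl ((hdiv (a := 0) ?_).trans (zero_add _))
    push_cast [hpow] at hβ ⊢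
    linear_combination hβ

end Arithmetic

section BlackPoints

variable {F V : Type*} [Field F] [Finite F] [AddCommGroup V] [Module F V]
  {S : Set (Submodule F V)} {n : ℕ} (hn : 1 ≤ n) (hV : finrank F V = 2 * n + 2)
  (hS : ∀ π ∈ S, IsCoatom π)
  (hP1 : ∀ p : Submodule F V, finrank F p = 1 →
    incidenceCount S p = Nat.card F ^ n * (Nat.card F ^ n - 1) ∨
      incidenceCount S p = Nat.card F ^ (2 * n))

include hn hV hS hP1

theorem ncard_of_incidenceCount_eq_or :
    (S.ncard : ℤ) = Nat.card F ^ n * (Nat.card F * Nat.card F ^ n - 1) := by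
  have : FiniteDimensional F V := .of_finrank_eq_succ hV
  have : Finite V := Module.finite_of_finite F
  have hq : 2 ≤ Nat.card F := Finite.one_lt_card
  have hqn : Nat.card F ≤ Nat.card F ^ n := Nat.le_self_pow (by omega) _
  refine eq_mul_sub_one_of_quadratic (by exact_mod_cast hq) (by exact_mod_cast hqn) ?_
  have hcount := ncard_quadratic_of_incidenceCount_eq_or hS hP1
  rw [hV] at hcount
  push_cast [Nat.one_le_pow n _ (by omega : 0 < Nat.card F)] at hcount
  linear_combination hcount

theorem card_mul_ncard_black_points {W : Submodule F V} (hW : finrank F W = 2 * n) :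
    (Nat.card F : ℤ) * ((Nat.card F - 1) *
        (pointsOfIncidenceCount S (Nat.card F ^ n * (Nat.card F ^ n - 1)) W).ncard) =
      (Nat.card F ^ n) ^ 2 + Nat.card F ^ 2 * Nat.card F ^ n - Nat.card F * Nat.card F ^ n -
        Nat.card F - (Nat.card F - 1) * incidenceCount S W * Nat.card F ^ n := by
  have : FiniteDimensional F V := .of_finrank_eq_succ hV
  have : Finite V := Module.finite_of_finite F
  have hcount := card_mul_ncard_pointsOfIncidenceCount hS hP1 W
  rw [hW, ncard_of_incidenceCount_eq_or hn hV hS hP1] at hcount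
  have hpos : 0 < Nat.card F := Nat.card_pos
  push_cast [Nat.one_le_pow n _ hpos] at hcount
  apply mul_left_cancel₀ (pow_ne_zero n (Nat.cast_ne_zero.2 hpos.ne' : (Nat.card F : ℤ) ≠ 0))
  linear_combination hcount

end BlackPoints

theorem stmt_18_general {F V : Type*} [Field F] [Finite F] [AddCommGroup V] [Module F V]
    {n q : ℕ} (hn : 1 ≤ n) (hq : Nat.card F = q) (hV : finrank F V = 2 * n + 2)
    {S : Set (Submodule F V)} (hS : ∀ π ∈ S, finrank F π = 2 * n + 1)
    (hP1 : ∀ p : Submodule F V, finrank F p = 1 →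
      incidenceCount S p = q ^ n * (q ^ n - 1) ∨ incidenceCount S p = q ^ (2 * n))
    (hP2 : ∀ W : Submodule F V, finrank F W = 2 * n →
      (∃ π ∈ S, W ≤ π) → q - 1 ≤ incidenceCount S W)
    {W : Submodule F V} (hW : finrank F W = 2 * n) :
    (pointsOfIncidenceCount S (q ^ n * (q ^ n - 1)) W).ncard ∈ blackPointCounts q n := by
  subst hq
  have : FiniteDimensional F V := .of_finrank_eq_succ hV
  have hcoatom (π) (hπ : π ∈ S) : IsCoatom π :=
    isCoatom_iff_finrank_add_one_eq.2 (by rw [hS π hπ, hV])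
  have hcodim : finrank F (V ⧸ W) = 2 := by
    have := W.finrank_quotient_add_finrank
    omega
  exact mem_blackPointCounts_of_mul_eq Finite.one_lt_card hn
    (incidenceCount_eq_or_of_codim_two hcoatom hcodim (hP2 W hW))
    (card_mul_ncard_black_points hn hV hcoatom hP1 hW)

/-- For `n ≥ 2` and a nonempty family `S` of hyperplanes of `PG(2n+1,q)`
satisfying (P1⁺) and (P2), every codimension-2 subspace contains exactly
`c₁ = (q^n+1)(q^{n-1}-1)/(q-1)`, `c₂ = 1 + q(q^{2n-2}-1)/(q-1)`,
`c₃ = (q^n-1)(q^{n-1}+1)/(q-1)`, or `c₄ = 1 + q + q²(q^{n-1}-1)(q^{n-2}+1)/(q-1)`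
black points. -/
theorem stmt_18 (n : ℕ) (hn : 2 ≤ n)
    (F : Type) [Field F] [Fintype F] (q : ℕ) (hq : Fintype.card F = q)
    (S : Set (Submodule F (Fin (2*n+2) → F)))
    (hS : S.Nonempty)
    (hhyp : ∀ π ∈ S, Module.finrank F π = 2*n+1)
    (hP1 : ∀ p : Submodule F (Fin (2*n+2) → F), Module.finrank F p = 1 →
      {π ∈ S | p ≤ π}.ncard = q^n * (q^n - 1) ∨ {π ∈ S | p ≤ π}.ncard = q^(2*n))
    (hP2 : ∀ W : Submodule F (Fin (2*n+2) → F), Module.finrank F W = 2*n →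
      (∃ π ∈ S, W ≤ π) → q - 1 ≤ {π ∈ S | W ≤ π}.ncard) :
    ∀ W : Submodule F (Fin (2*n+2) → F), Module.finrank F W = 2*n →
      {p : Submodule F (Fin (2*n+2) → F) | Module.finrank F p = 1 ∧
        {σ ∈ S | p ≤ σ}.ncard = q^n * (q^n - 1) ∧ p ≤ W}.ncard ∈
      ({(q^n + 1) * (q^(n-1) - 1) / (q - 1),
        1 + q * (q^(2*n-2) - 1) / (q - 1),
        (q^n - 1) * (q^(n-1) + 1) / (q - 1),
        1 + q + q^2 * ((q^(n-1) - 1) * (q^(n-2) + 1)) / (q - 1)} : Set ℕ) := by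
  intro W hW
  exact stmt_18_general (by omega) (Nat.card_eq_fintype_card.trans hq) (by simp) hhyp hP1 hP2 hW
end

section
/- Let q be a prime power and let Σ be a family of planes of PG(3,q) with |Σ| = q³ + q² such that every point of PG(3,q) lies in exactly q²+q or exactly q² planes of Σ, and every line of PG(3,q) that is contained in at least one plane of Σ is contained in at least q−1 planes of Σ. Call a point white if it lies in exactly q² planes of Σ and black if it lies in exactly q²+q planes of Σ. Then there exists a line l of PG(3,q) such that the white points are exactly the q+1 points contained in l (so the black points are exactly the points of PG(3,q) not contained in l), and Σ is exactly the set of planes of PG(3,q) not containing l, equivalently the planes meeting l in a unique point. -/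
/-!
Exactly `q + 1` planes lie outside `S`; a black point is on one of them and a white point on all of
them. A point on two of them is therefore on all of them, so they all pass through the line common
to two. Only `q + 1` planes pass through that line, hence the planes outside `S` are exactly these.
The argument is the same for hyperplanes of a projective space of any dimension at least two.
-/

lemma sum_Ico_succ_pow_lt_sum_Ico_pow {q k m : ℕ} (hq : 0 < q) (hkm : k < m) :
    ∑ i ∈ Finset.Ico (k + 1) m, q ^ i < ∑ i ∈ Finset.Ico k m, q ^ i := by
  rw [Finset.sum_eq_sum_Ico_succ_bot hkm]
  exact Nat.lt_add_of_pos_left (Nat.pow_pos hq)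

section Hyperplanes

open Module Submodule

variable {F V : Type*} [Field F] [AddCommGroup V] [Module F V]

/-- The hyperplanes of the projective space of `V` that contain `W`; `W = ⊥` gives all
hyperplanes. Hyperplanes are encoded by an additive dimension condition, which avoids truncated
subtraction. -/
def hyperplanesThrough (W : Submodule F V) : Set (Submodule F V) :=
  {H | finrank F H + 1 = finrank F V ∧ W ≤ H}

lemma hyperplanesThrough_anti {W₁ W₂ : Submodule F V} (h : W₁ ≤ W₂) :
    hyperplanesThrough W₂ ⊆ hyperplanesThrough W₁ :=
  fun _ hH ↦ ⟨hH.1, h.trans hH.2⟩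

lemma hyperplanesThrough_inter_hyperplanesThrough (W₁ W₂ : Submodule F V) :
    hyperplanesThrough W₁ ∩ hyperplanesThrough W₂ = hyperplanesThrough (W₁ ⊔ W₂) := by
  ext H
  simp only [hyperplanesThrough, Set.mem_inter_iff, Set.mem_ofPred_eq, sup_le_iff]
  tauto

lemma hyperplanesThrough_inter_hyperplanesThrough_bot_sdiff (W : Submodule F V)
    (S : Set (Submodule F V)) :
    hyperplanesThrough W ∩ (hyperplanesThrough ⊥ \ S) = hyperplanesThrough W \ S := by
  rw [← Set.inter_sdiff_assoc, Set.inter_eq_left.mpr (hyperplanesThrough_anti bot_le)]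

lemma sep_le_eq_hyperplanesThrough_inter {S : Set (Submodule F V)}
    (hS : S ⊆ hyperplanesThrough ⊥) (W : Submodule F V) :
    {H ∈ S | W ≤ H} = hyperplanesThrough W ∩ S := by
  ext H
  exact ⟨fun h ↦ ⟨⟨(hS h.1).1, h.2⟩, h.1⟩, fun h ↦ ⟨h.2, h.1.2⟩⟩

lemma finrank_sup_of_not_le [FiniteDimensional F V] {p W : Submodule F V}
    (hp : finrank F p = 1) (hpW : ¬ p ≤ W) :
    finrank F ↥(W ⊔ p) = finrank F W + 1 := by
  have hdisj : W ⊓ p = ⊥ :=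
    ((isAtom_iff_finrank_eq_one.mpr hp).not_le_iff_disjoint.mp hpW).symm.eq_bot
  rw [← hp, ← finrank_sup_add_finrank_inf_eq, hdisj, finrank_bot, add_zero]

lemma finrank_inf_add_two_of_ne [FiniteDimensional F V] {A B : Submodule F V}
    (hA : finrank F A + 1 = finrank F V) (hB : finrank F B + 1 = finrank F V) (hAB : A ≠ B) :
    finrank F ↥(A ⊓ B) + 2 = finrank F V := by
  have hA_lt : A < A ⊔ B := by
    refine left_lt_sup.mpr fun hBA ↦ hAB (eq_of_le_of_finrank_eq hBA ?_).symm
    lia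
  have h_lt := finrank_lt_finrank_of_lt hA_lt
  have h_le := (A ⊔ B).finrank_le
  have h_dim := finrank_sup_add_finrank_inf_eq A B
  lia

lemma ncard_finrank_eq_one_and_le [Finite F] (W : Submodule F V) :
    {p : Submodule F V | finrank F p = 1 ∧ p ≤ W}.ncard =
      ∑ i ∈ Finset.range (finrank F W), Nat.card F ^ i := by
  have himage : map W.subtype '' {p : Submodule F W | finrank F p = 1} =
      {p : Submodule F V | finrank F p = 1 ∧ p ≤ W} := by
    ext p
    constructor
    · rintro ⟨p, hp, rfl⟩
      exact ⟨(finrank_map_subtype_eq W p).trans hp, map_subtype_le W p⟩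
    · rintro ⟨hp, hpW⟩
      have hmap : (p.comap W.subtype).map W.subtype = p := by
        rw [map_comap_subtype, inf_eq_right.mpr hpW]
      exact ⟨p.comap W.subtype,
        by rw [Set.mem_ofPred_eq, ← finrank_map_subtype_eq, hmap, hp], hmap⟩
  rw [← himage, Set.ncard_image_of_injective _ (map_injective_of_injective W.subtype_injective),
    ← Projectivization.card_of_finrank F W rfl]
  exact (Nat.card_congr (Projectivization.equivSubmodule F W)).symm

lemma dualAnnihilator_image_hyperplanesThrough [FiniteDimensional F V] (W : Submodule F V) :
    dualAnnihilator '' hyperplanesThrough W =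
      {p : Submodule F (Dual F V) | finrank F p = 1 ∧ p ≤ W.dualAnnihilator} := by
  ext p
  constructor
  · rintro ⟨H, ⟨hH, hWH⟩, rfl⟩
    have hdim := Subspace.finrank_add_finrank_dualAnnihilator_eq H
    exact ⟨by lia, dualAnnihilator_anti hWH⟩
  · rintro ⟨hp, hpW⟩
    have hdim := Subspace.finrank_add_finrank_dualCoannihilator_eq p
    exact ⟨p.dualCoannihilator, ⟨by lia, le_dualAnnihilator_iff_le_dualCoannihilator.mp hpW⟩,
      Subspace.dualCoannihilator_dualAnnihilator_eq⟩

lemma ncard_hyperplanesThrough [Finite F] [FiniteDimensional F V] {W : Submodule F V} {k : ℕ}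
    (hW : finrank F W + k = finrank F V) :
    (hyperplanesThrough W).ncard = ∑ i ∈ Finset.range k, Nat.card F ^ i := by
  have hdim : finrank F W.dualAnnihilator = k := by
    have := Subspace.finrank_add_finrank_dualAnnihilator_eq W
    lia
  rw [← Set.ncard_image_of_injective _ Subspace.orderIsoFiniteDimensional.injective]
  exact (congrArg Set.ncard (dualAnnihilator_image_hyperplanesThrough W)).trans
    (hdim ▸ ncard_finrank_eq_one_and_le W.dualAnnihilator)

lemma inf_le_of_subsingleton_or_subset_hyperplanesThrough {T : Set (Submodule F V)}
    (hT : ∀ p : Submodule F V, finrank F p = 1 →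
      (hyperplanesThrough p ∩ T).Subsingleton ∨ T ⊆ hyperplanesThrough p)
    {A B H : Submodule F V} (hA : A ∈ hyperplanesThrough ⊥ ∩ T)
    (hB : B ∈ hyperplanesThrough ⊥ ∩ T) (hAB : A ≠ B) (hH : H ∈ T) : A ⊓ B ≤ H := by
  refine le_iff_atom_le_imp.mpr fun p hp hpAB ↦ ?_
  obtain hsub | hall := hT p (isAtom_iff_finrank_eq_one.mp hp)
  · exact absurd (hsub ⟨⟨hA.1.1, hpAB.trans inf_le_left⟩, hA.2⟩
      ⟨⟨hB.1.1, hpAB.trans inf_le_right⟩, hB.2⟩) hAB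
  · exact (hall hH).2

theorem exists_eq_hyperplanesThrough [Finite F] [FiniteDimensional F V]
    {T : Set (Submodule F V)} (hT : T ⊆ hyperplanesThrough ⊥) (hcard : T.ncard = Nat.card F + 1)
    (hpoint : ∀ p : Submodule F V, finrank F p = 1 →
      (hyperplanesThrough p ∩ T).Subsingleton ∨ T ⊆ hyperplanesThrough p) :
    ∃ l : Submodule F V, finrank F l + 2 = finrank F V ∧ T = hyperplanesThrough l := by
  have : Finite V := Module.finite_of_finite F
  obtain ⟨A, hA, B, hB, hAB⟩ : ∃ A ∈ T, ∃ B ∈ T, A ≠ B :=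
    (Set.one_lt_ncard T.toFinite).mp (by have := Nat.card_pos (α := F); lia)
  have hdim := finrank_inf_add_two_of_ne (hT hA).1 (hT hB).1 hAB
  refine ⟨A ⊓ B, hdim, Set.eq_of_subset_of_ncard_le (fun H hH ↦ ⟨(hT hH).1, ?_⟩) ?_⟩
  · exact inf_le_of_subsingleton_or_subset_hyperplanesThrough hpoint
      ⟨hT hA, hA⟩ ⟨hT hB, hB⟩ hAB hH
  · rw [ncard_hyperplanesThrough hdim, hcard, geom_sum_two]


lemma ncard_hyperplanesThrough_sdiff_of_le [Finite F] [FiniteDimensional F V]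
    {W l : Submodule F V} {k m : ℕ} (hl : finrank F l + k = finrank F V)
    (hW : finrank F W + m = finrank F V) (hWl : W ≤ l) :
    (hyperplanesThrough W \ hyperplanesThrough l).ncard =
      ∑ i ∈ Finset.Ico k m, Nat.card F ^ i := by
  have : Finite V := Module.finite_of_finite F
  have hkm : k ≤ m := by
    have := finrank_mono hWl
    lia
  rw [Set.ncard_sdiff (hyperplanesThrough_anti hWl), ncard_hyperplanesThrough hW,
    ncard_hyperplanesThrough hl, ← Finset.sum_range_add_sum_Ico _ hkm, Nat.add_sub_cancel_left]

lemma ncard_hyperplanesThrough_sdiff_of_not_le [Finite F] [FiniteDimensional F V]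
    {p l : Submodule F V} {k m : ℕ} (hl : finrank F l + (k + 1) = finrank F V)
    (hp : finrank F p = 1) (hV : m + 1 = finrank F V) (hpl : ¬ p ≤ l) :
    (hyperplanesThrough p \ hyperplanesThrough l).ncard =
      ∑ i ∈ Finset.Ico k m, Nat.card F ^ i := by
  have hsup : finrank F ↥(l ⊔ p) + k = finrank F V := by
    rw [finrank_sup_of_not_le hp hpl, ← hl]
    lia
  rw [← Set.sdiff_inter_self_eq_sdiff, hyperplanesThrough_inter_hyperplanesThrough]
  exact ncard_hyperplanesThrough_sdiff_of_le hsup (by lia) le_sup_right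

theorem exists_eq_sdiff_hyperplanesThrough [Finite F] [FiniteDimensional F V] {n : ℕ}
    (hV : finrank F V = n + 3) {S : Set (Submodule F V)} (hS : S ⊆ hyperplanesThrough ⊥)
    (hcard : S.ncard = ∑ i ∈ Finset.Ico 2 (n + 3), Nat.card F ^ i)
    (hpoint : ∀ p : Submodule F V, finrank F p = 1 →
      (hyperplanesThrough p ∩ S).ncard = ∑ i ∈ Finset.Ico 1 (n + 2), Nat.card F ^ i ∨
      (hyperplanesThrough p ∩ S).ncard = ∑ i ∈ Finset.Ico 2 (n + 2), Nat.card F ^ i) :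
    ∃ l : Submodule F V, finrank F l + 2 = finrank F V ∧
      S = hyperplanesThrough ⊥ \ hyperplanesThrough l := by
  have : Finite V := Module.finite_of_finite F
  set T := hyperplanesThrough ⊥ \ S with hT
  have hTcard : T.ncard = Nat.card F + 1 := by
    rw [Set.ncard_sdiff hS, hcard, ncard_hyperplanesThrough (k := n + 3) (by simp [hV]),
      ← Finset.sum_range_add_sum_Ico _ (show 2 ≤ n + 3 by lia), Nat.add_sub_cancel_right,
      geom_sum_two]
  have hTpoint (p : Submodule F V) (hp : finrank F p = 1) :
      (hyperplanesThrough p ∩ T).Subsingleton ∨ T ⊆ hyperplanesThrough p := by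
    have hadd := Set.ncard_inter_add_ncard_sdiff_eq_ncard (hyperplanesThrough p) S
    rw [← hyperplanesThrough_inter_hyperplanesThrough_bot_sdiff, ← hT,
      ncard_hyperplanesThrough (k := n + 2) (by lia)] at hadd
    obtain hblack | hwhite := hpoint p hp
    · rw [hblack, ← Finset.sum_range_add_sum_Ico _ (show 1 ≤ n + 2 by lia), geom_sum_one] at hadd
      exact .inl (Set.ncard_le_one_iff_subsingleton.mp (by lia))
    · rw [hwhite, ← Finset.sum_range_add_sum_Ico _ (show 2 ≤ n + 2 by lia), geom_sum_two] at hadd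
      exact .inr (Set.inter_eq_right.mp
        (Set.eq_of_subset_of_ncard_le Set.inter_subset_right (by lia)))
  obtain ⟨l, hl, hTl⟩ := exists_eq_hyperplanesThrough Set.sdiff_subset hTcard hTpoint
  exact ⟨l, hl, by rw [← hTl, Set.sdiff_sdiff_cancel_left hS]⟩

-- For `n = 1` the three sums are `q ^ 2 + q ^ 3`, `q + q ^ 2` and `q ^ 2`.
theorem stmt_19_general [Finite F] {n q : ℕ} (hq : Nat.card F = q) (hV : finrank F V = n + 3)
    (S : Set (Submodule F V)) (hcard : S.ncard = ∑ i ∈ Finset.Ico 2 (n + 3), q ^ i)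
    (hhyperplane : ∀ H ∈ S, finrank F H = n + 2)
    (hpoint : ∀ p : Submodule F V, finrank F p = 1 →
      {H ∈ S | p ≤ H}.ncard = ∑ i ∈ Finset.Ico 1 (n + 2), q ^ i ∨
      {H ∈ S | p ≤ H}.ncard = ∑ i ∈ Finset.Ico 2 (n + 2), q ^ i) :
    ∃ l : Submodule F V, finrank F l = n + 1 ∧
      {p : Submodule F V | finrank F p = 1 ∧
        {H ∈ S | p ≤ H}.ncard = ∑ i ∈ Finset.Ico 2 (n + 2), q ^ i} =
        {p : Submodule F V | finrank F p = 1 ∧ p ≤ l} ∧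
      {p : Submodule F V | finrank F p = 1 ∧
        {H ∈ S | p ≤ H}.ncard = ∑ i ∈ Finset.Ico 1 (n + 2), q ^ i} =
        {p : Submodule F V | finrank F p = 1 ∧ ¬ p ≤ l} ∧
      S = {H : Submodule F V | finrank F H = n + 2 ∧ ¬ l ≤ H} := by
  subst hq
  have : FiniteDimensional F V := Module.finite_of_finrank_pos (by lia)
  have hS : S ⊆ hyperplanesThrough ⊥ := fun H hH ↦ ⟨by rw [hhyperplane H hH, hV], bot_le⟩
  have hsep := sep_le_eq_hyperplanesThrough_inter hS
  simp only [hsep] at hpoint ⊢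
  obtain ⟨l, hl, hSl⟩ := exists_eq_sdiff_hyperplanesThrough hV hS hcard hpoint
  have hinter (p : Submodule F V) :
      hyperplanesThrough p ∩ S = hyperplanesThrough p \ hyperplanesThrough l := by
    rw [hSl, hyperplanesThrough_inter_hyperplanesThrough_bot_sdiff]
  have hwhite (p : Submodule F V) (hp : finrank F p = 1) (hpl : p ≤ l) :
      (hyperplanesThrough p ∩ S).ncard = ∑ i ∈ Finset.Ico 2 (n + 2), Nat.card F ^ i := by
    rw [hinter, ncard_hyperplanesThrough_sdiff_of_le hl (m := n + 2) (by lia) hpl]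
  have hblack (p : Submodule F V) (hp : finrank F p = 1) (hpl : ¬ p ≤ l) :
      (hyperplanesThrough p ∩ S).ncard = ∑ i ∈ Finset.Ico 1 (n + 2), Nat.card F ^ i := by
    rw [hinter, ncard_hyperplanesThrough_sdiff_of_not_le hl hp (m := n + 2) (by lia) hpl]
  have hne : ∑ i ∈ Finset.Ico 1 (n + 2), Nat.card F ^ i ≠
      ∑ i ∈ Finset.Ico 2 (n + 2), Nat.card F ^ i :=
    (sum_Ico_succ_pow_lt_sum_Ico_pow Nat.card_pos (by lia)).ne'
  refine ⟨l, by lia, ?_, ?_, ?_⟩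
  · ext p
    refine and_congr_right fun hp ↦ ⟨fun h ↦ ?_, hwhite p hp⟩
    by_contra hpl
    exact hne ((hblack p hp hpl).symm.trans h)
  · ext p
    exact and_congr_right fun hp ↦
      ⟨fun h hpl ↦ hne (h.symm.trans (hwhite p hp hpl)), hblack p hp⟩
  · ext H
    rw [hSl]
    simp only [hyperplanesThrough, bot_le, hV, Set.mem_sdiff, Set.mem_ofPred_eq]
    lia

end Hyperplanes

/-- For a prime power `q` and a family `S` of planes of `PG(3,q)` with
`|S| = q³+q²`, in which every point lies in exactly `q²+q` or `q²` planes of `S` and every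
line contained in some plane of `S` is contained in at least `q-1` planes of `S`, there is a
line `l` such that the white points are exactly the points contained in `l`, the black points
are exactly the points not contained in `l`, and `S` is exactly the set of planes not
containing `l` (equivalently, meeting `l` in a unique point). -/
theorem stmt_19 (F : Type) [Field F] [Fintype F] (q : ℕ) (hq : Fintype.card F = q)
    (S : Set (Submodule F (Fin 4 → F)))
    (hcard : S.ncard = q^3 + q^2)
    (hplane : ∀ π ∈ S, Module.finrank F π = 3)
    (hP1 : ∀ p : Submodule F (Fin 4 → F), Module.finrank F p = 1 →
      {π ∈ S | p ≤ π}.ncard = q^2 + q ∨ {π ∈ S | p ≤ π}.ncard = q^2)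
    (hP2 : ∀ L : Submodule F (Fin 4 → F), Module.finrank F L = 2 →
      (∃ π ∈ S, L ≤ π) → q - 1 ≤ {π ∈ S | L ≤ π}.ncard) :
    ∃ l : Submodule F (Fin 4 → F), Module.finrank F l = 2 ∧
      {p : Submodule F (Fin 4 → F) | Module.finrank F p = 1 ∧
        {π ∈ S | p ≤ π}.ncard = q^2} =
        {p : Submodule F (Fin 4 → F) | Module.finrank F p = 1 ∧ p ≤ l} ∧
      {p : Submodule F (Fin 4 → F) | Module.finrank F p = 1 ∧
        {π ∈ S | p ≤ π}.ncard = q^2 + q} =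
        {p : Submodule F (Fin 4 → F) | Module.finrank F p = 1 ∧ ¬ p ≤ l} ∧
      S = {π : Submodule F (Fin 4 → F) | Module.finrank F π = 3 ∧ ¬ l ≤ π} := by
  simpa [Finset.sum_Ico_succ_top, add_comm] using
    stmt_19_general (n := 1) (Nat.card_eq_fintype_card.trans hq) (by simp) S
      (by simpa [Finset.sum_Ico_succ_top, add_comm] using hcard) hplane
      (by simpa [Finset.sum_Ico_succ_top, add_comm] using hP1)
end
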